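/- arXiv:2401.05729 — 3 statements merged into one kernel-verified Lean document; each statement's English description precedes it below -/
import Mathlib

section
/- Let f : ℝ⁶ → ℂ be a Schwartz function satisfying f(−x, y) = f(x, −y) = f(x, y) for all (x,y) ∈ ℝ³×ℝ³. Let s₁, s₂, w ∈ ℂ with Re(s₁) > 1, Re(s₂) > 1 and Re(w) > 3. Then the integral Z(f, s₁, s₂, w) := ∫₀^∞∫₀^∞∫₀^∞∫₀¹∫₀¹ (μ²t²)^{s₁} (μ²s²)^{s₂} μ^{4w} ∑_{k=1}^{∞} ∑_{v ∈ kL'} k · f(h·v) du dv (dt/t³)(ds/s³)(dμ/μ) converges absolutely, and Z(f, s₁, s₂, w) = 4^{w} ξ₊(s₁,s₂,w) Φ₊(f,s₁,s₂,w) + 4^{w} ξ₋(s₁,s₂,w) Φ₋(f,s₁,s₂,w), where Φ±(f,s₁,s₂,w) := ∫_{(0,∞)³×ℝ²} (μ²t²)^{s₁} (μ²s²)^{s₂} μ^{4w} f(h·x±) du dv (dt/t³)(ds/s³)(dμ/μ). -/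
open MeasureTheory

noncomputable section

/-- `A m n` is the number of residue classes `x` modulo `m` with `x² ≡ n (mod m)`. -/
def A (m : ℕ) (n : ℤ) : ℕ := Nat.card {x : ZMod m // x ^ 2 = (n : ZMod m)}

/-- Action of the lower-triangular matrix `[[a,0],[c,d]]` on the coefficients
`(x₁,x₂,x₃)` of a binary quadratic form. -/
def rhoAct (a c d : ℝ) (x : ℝ × ℝ × ℝ) : ℝ × ℝ × ℝ :=
  (a ^ 2 * x.1, 2 * a * c * x.1 + a * d * x.2.1,
    c ^ 2 * x.1 + c * d * x.2.1 + d ^ 2 * x.2.2)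

/-- Parameters `(μ, t, s, u, v)` of the group `B⁺`. -/
abbrev Param : Type := ℝ × ℝ × ℝ × ℝ × ℝ

/-- The space `ℝ³ × ℝ³` of pairs of binary quadratic forms. -/
abbrev Vsp : Type := (ℝ × ℝ × ℝ) × (ℝ × ℝ × ℝ)

/-- The action of `h = (μ,t,s,u,v)`, via `g₁ = μ·[[t,0],[u/t,1/t]]`,
`g₂ = μ·[[s,0],[v/s,1/s]]`. -/
def act (p : Param) (q : Vsp) : Vsp :=
  (rhoAct (p.1 * p.2.1) (p.1 * p.2.2.2.1 / p.2.1) (p.1 / p.2.1) q.1,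
   rhoAct (p.1 * p.2.2.1) (p.1 * p.2.2.2.2 / p.2.2.1) (p.1 / p.2.2.1) q.2)

/-- The base point `x₊`. -/
def xplus : Vsp := ((1, 0, -1), (1, 0, -1))

/-- The base point `x₋`. -/
def xminus : Vsp := ((1, 0, 1), (1, 0, 1))

/-- The set `L'` of nonsingular integral points: equal discriminants and
`x₁·y₁·(x₂²−4x₁x₃) ≠ 0`. -/
def Lset : Set ((ℤ × ℤ × ℤ) × (ℤ × ℤ × ℤ)) :=
  {p | p.1.2.1 ^ 2 - 4 * p.1.1 * p.1.2.2 = p.2.2.1 ^ 2 - 4 * p.2.1 * p.2.2.2 ∧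
       p.1.1 * p.2.1 * (p.1.2.1 ^ 2 - 4 * p.1.1 * p.1.2.2) ≠ 0}

/-- Coercion of an integral point to `ℝ⁶`. -/
def toR (p : (ℤ × ℤ × ℤ) × (ℤ × ℤ × ℤ)) : Vsp :=
  (((p.1.1 : ℝ), (p.1.2.1 : ℝ), (p.1.2.2 : ℝ)),
   ((p.2.1 : ℝ), (p.2.2.1 : ℝ), (p.2.2.2 : ℝ)))

/-- The lattice sum `∑_{k≥1} ∑_{v ∈ kL'} k · f(h·v)`. -/
def latticeSum (f : Vsp → ℂ) (h : Param) : ℂ :=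
  ∑' (k : ℕ+) (x : Lset), (k : ℂ) *
    f (act h (toR ((k : ℤ) • (x : (ℤ × ℤ × ℤ) × (ℤ × ℤ × ℤ)))))

/-- Integrand of the zeta function `Z(f,s₁,s₂,w)`, including the Haar weight
`du dv (dt/t³)(ds/s³)(dμ/μ)`. -/
def Zintegrand (f : Vsp → ℂ) (s₁ s₂ w : ℂ) (p : Param) : ℂ :=
  ((p.1 ^ 2 * p.2.1 ^ 2 : ℝ) : ℂ) ^ s₁ * ((p.1 ^ 2 * p.2.2.1 ^ 2 : ℝ) : ℂ) ^ s₂ *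
    ((p.1 : ℝ) : ℂ) ^ (4 * w) * latticeSum f p *
    (((p.2.1 ^ 3 * p.2.2.1 ^ 3 * p.1)⁻¹ : ℝ) : ℂ)

/-- Integration domain: `μ, t, s ∈ (0,∞)`, `u, v ∈ (0,1]`. -/
def Zdomain : Set Param :=
  Set.Ioi 0 ×ˢ Set.Ioi 0 ×ˢ Set.Ioi 0 ×ˢ Set.Ioc 0 1 ×ˢ Set.Ioc 0 1

/-- The zeta function `Z(f, s₁, s₂, w)`. -/
def Zfun (f : Vsp → ℂ) (s₁ s₂ w : ℂ) : ℂ := ∫ p in Zdomain, Zintegrand f s₁ s₂ w p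

/-- Numerator `∑_{d²|D, d|m, d|n} d · A(4m/d, εD/d²) · A(4n/d, εD/d²)`. -/
def Anum (ε : ℤ) (D m n : ℕ) : ℕ :=
  ∑ d ∈ m.divisors.filter (fun d : ℕ => (d : ℤ) ^ 2 ∣ (D : ℤ) ∧ d ∣ n),
    d * A (4 * m / d) (ε * (D : ℤ) / (d : ℤ) ^ 2) * A (4 * n / d) (ε * (D : ℤ) / (d : ℤ) ^ 2)

/-- The multiple Dirichlet series `ξ_ε(s₁,s₂,w)`. -/
def xiMDS (ε : ℤ) (s₁ s₂ w : ℂ) : ℂ :=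
  ∑' q : ℕ × ℕ × ℕ,
    (Anum ε (q.1 + 1) (q.2.1 + 1) (q.2.2 + 1) : ℂ) /
      (((q.2.1 + 1 : ℕ) : ℂ) ^ s₁ * ((q.2.2 + 1 : ℕ) : ℂ) ^ s₂ * ((q.1 + 1 : ℕ) : ℂ) ^ w)

/-- Integration domain of the orbital integrals: `μ, t, s ∈ (0,∞)`, `u, v ∈ ℝ`. -/
def Phidomain : Set Param :=
  Set.Ioi 0 ×ˢ Set.Ioi 0 ×ˢ Set.Ioi 0 ×ˢ (Set.univ : Set (ℝ × ℝ))

/-- The orbital integral `Φ(f, s₁, s₂, w)` at the base point `x₀`. -/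
def PhiInt (f : Vsp → ℂ) (s₁ s₂ w : ℂ) (x₀ : Vsp) : ℂ :=
  ∫ p in Phidomain,
    ((p.1 ^ 2 * p.2.1 ^ 2 : ℝ) : ℂ) ^ s₁ * ((p.1 ^ 2 * p.2.2.1 ^ 2 : ℝ) : ℂ) ^ s₂ *
      ((p.1 : ℝ) : ℂ) ^ (4 * w) * f (act p x₀) *
      (((p.2.1 ^ 3 * p.2.2.1 ^ 3 * p.1)⁻¹ : ℝ) : ℂ)

theorem A_le (N : ℕ) (hN : 0 < N) (D : ℤ) (hD : D ≠ 0) :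
    A N D ≤ N.divisors.card * (2 * D.natAbs) := by
  classical
  have : NeZero N := ⟨hN.ne'⟩
  unfold A
  rw [Nat.card_eq_fintype_card, Fintype.card_subtype]
  set S : Finset (ZMod N) := Finset.univ.filter (fun x => x ^ 2 = (D : ZMod N)) with hS
  rcases S.eq_empty_or_nonempty with h | ⟨x0, hx0⟩
  · simp [h]
  have key : ∀ x ∈ S, (N : ℤ) ∣ (x.val : ℤ) ^ 2 - D := by
    intro x hx
    rw [← ZMod.intCast_zmod_eq_zero_iff_dvd] 
    push_cast
    rw [ZMod.natCast_zmod_val]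
    simp only [hS, Finset.mem_filter] at hx
    rw [hx.2, sub_self]
  set φ : ZMod N → ℕ := fun x => Int.gcd ((x.val : ℤ) - x0.val) N with hφ
  have hmap : ∀ x ∈ S, φ x ∈ N.divisors := by
    intro x hx
    rw [Nat.mem_divisors]
    exact ⟨by exact Int.natCast_dvd_natCast.1 (Int.gcd_dvd_right ((x.val : ℤ) - x0.val) (N:ℤ)), hN.ne'⟩
  rw [mul_comm]
  refine Finset.card_le_mul_card_image_of_maps_to hmap _ ?_
  intro d hd
  obtain ⟨N', hN'⟩ := Nat.dvd_of_mem_divisors hd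
  have hNz : (N : ℤ) = d * N' := by exact_mod_cast hN'
  have hd0 : 0 < d := Nat.pos_of_mem_divisors hd
  have hN'0 : 0 < N' := by
    rcases Nat.eq_zero_or_pos N' with h | h
    · subst h; simp at hN'; omega
    · exact h
  set g := Nat.gcd d N' with hg
  have hg0 : 0 < g := Nat.gcd_pos_of_pos_left _ hd0
  have f1 : ∀ x ∈ S, φ x = d → (d : ℤ) ∣ (x.val : ℤ) - x0.val ∧ (N' : ℤ) ∣ (x.val : ℤ) + x0.val := by
    intro x hx hxd
    have h1 : (d : ℤ) ∣ (x.val : ℤ) - x0.val := by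
      rw [← hxd]; exact Int.gcd_dvd_left _ _
    refine ⟨h1, ?_⟩
    obtain ⟨y, hy⟩ := h1
    have h2 : (N : ℤ) ∣ ((x.val : ℤ) - x0.val) * (x.val + x0.val) := by
      have := dvd_sub (key x hx) (key x0 hx0)
      exact this.trans (dvd_of_eq (by ring))
    have hcop : IsCoprime (N' : ℤ) y := by
      rw [Int.isCoprime_iff_gcd_eq_one]
      have h3 : Int.gcd ((d:ℤ) * y) ((d:ℤ) * N') = d := by
        rw [← hy]
        rw [← hNz]; exact hxd
      rw [Int.gcd_mul_left] at h3
      simp only [Int.natAbs_natCast] at h3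
      have : Int.gcd y N' = 1 := by
        have := Nat.eq_of_mul_eq_mul_left hd0 (h3.trans (mul_one d).symm)
        exact this
      rw [Int.gcd_comm]; exact this
    rw [hy, hNz] at h2
    rw [mul_assoc] at h2
    have h4 := (mul_dvd_mul_iff_left (by exact_mod_cast hd0.ne' : (d:ℤ) ≠ 0)).1 h2
    exact hcop.dvd_of_dvd_mul_left h4
  rcases (S.filter (fun x => φ x = d)).eq_empty_or_nonempty with h | ⟨x1, hx1⟩
  · simp [h]
  rw [Finset.mem_filter] at hx1
  obtain ⟨a1, a2⟩ := f1 x1 hx1.1 hx1.2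
  have hgd : (g : ℤ) ∣ d := by exact_mod_cast Nat.gcd_dvd_left d N'
  have hgN' : (g : ℤ) ∣ N' := by exact_mod_cast Nat.gcd_dvd_right d N'
  have hgle : g ≤ 2 * D.natAbs := by
    have h1 : (g : ℤ) ∣ 2 * x0.val := by
      have := dvd_sub (hgN'.trans a2) (hgd.trans a1)
      exact this.trans (dvd_of_eq (by ring))
    have h2 : (g : ℤ) ^ 2 ∣ 4 * (x0.val : ℤ) ^ 2 := by
      have := pow_dvd_pow_of_dvd h1 2
      exact this.trans (dvd_of_eq (by ring))
    have h3 : (g : ℤ) ^ 2 ∣ (x0.val : ℤ) ^ 2 - D := by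
      refine dvd_trans ?_ (key x0 hx0)
      rw [hNz, sq]
      exact mul_dvd_mul hgd hgN'
    have h4 : (g : ℤ) ^ 2 ∣ (2:ℤ) ^ 2 * D := by
      have := dvd_sub h2 (h3.mul_left 4)
      exact this.trans (dvd_of_eq (by ring))
    have h5 := Int.natAbs_dvd_natAbs.2 h4
    rw [Int.natAbs_pow, Int.natAbs_mul] at h5
    simp only [Int.natAbs_natCast] at h5
    have hDp : 0 < D.natAbs := Int.natAbs_pos.2 hD
    have h6 := Nat.le_of_dvd (by positivity) h5
    norm_num at h6
    nlinarith
  refine le_trans ?_ hgle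
  set M := Nat.lcm d N' with hM
  have hM0 : 0 < M := Nat.lcm_pos hd0 hN'0
  have hgM : g * M = N := by rw [hN']; exact Nat.gcd_mul_lcm d N'
  rw [← Finset.card_range g]
  refine Finset.card_le_card_of_injOn (fun x => x.val / M) ?_ ?_
  · intro x hx
    simp only [Finset.coe_range, Set.mem_Iio]
    rw [Nat.div_lt_iff_lt_mul hM0, hgM]
    exact ZMod.val_lt x
  · intro x hx y hy hxy
    simp only [Finset.coe_filter, Set.mem_ofPred_eq] at hx hy
    obtain ⟨b1, b2⟩ := f1 x hx.1 hx.2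
    obtain ⟨c1, c2⟩ := f1 y hy.1 hy.2
    have e1 : (d : ℤ) ∣ (x.val : ℤ) - y.val := by
      have := dvd_sub b1 c1; exact this.trans (dvd_of_eq (by ring))
    have e2 : (N' : ℤ) ∣ (x.val : ℤ) - y.val := by
      have := dvd_sub b2 c2; exact this.trans (dvd_of_eq (by ring))
    have e3 : (M : ℤ) ∣ (x.val : ℤ) - y.val := by
      have := lcm_dvd e1 e2
      rwa [← Int.coe_lcm, Int.lcm_natCast_natCast] at this
    have e4 : x.val % M = y.val % M := by
      have h := Int.emod_eq_emod_iff_emod_sub_eq_zero.2 (Int.emod_eq_zero_of_dvd e3)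
      exact_mod_cast h
    apply ZMod.val_injective N
    rw [← Nat.div_add_mod x.val M, ← Nat.div_add_mod y.val M, e4]
    simp only at hxy
    rw [hxy]

def sg (b : Bool) : ℤ := if b then 1 else -1

abbrev Sol (m : ℕ+) (D : ℤ) : Type := {x : ZMod (4 * (m : ℕ)) // x ^ 2 = (D : ZMod (4 * (m : ℕ)))}

instance fourNeZero (m : ℕ+) : NeZero (4 * (m : ℕ)) := ⟨by have := m.pos; omega⟩

def lead (m : ℕ+) (a : ZMod (4 * (m : ℕ))) : ℤ := if a.val < 2 * (m : ℕ) then (m : ℤ) else -(m : ℤ)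

def bform (m : ℕ+) (D : ℤ) (a : ZMod (4 * (m : ℕ))) : ℤ × ℤ × ℤ :=
  (lead m a, (a.val : ℤ), ((a.val : ℤ) ^ 2 - D) / (4 * lead m a))

def nsh (j : ℤ) (x : ℤ × ℤ × ℤ) : ℤ × ℤ × ℤ :=
  (x.1, x.2.1 + 2 * j * x.1, x.2.2 + j * x.2.1 + j ^ 2 * x.1)

def idisc (x : ℤ × ℤ × ℤ) : ℤ := x.2.1 ^ 2 - 4 * x.1 * x.2.2

theorem lead_abs (m : ℕ+) (a) : |lead m a| = (m : ℤ) := by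
  unfold lead
  have := m.pos
  split_ifs
  · rw [abs_of_nonneg]; positivity
  · rw [abs_neg, abs_of_nonneg]; positivity

theorem lead_ne (m : ℕ+) (a) : lead m a ≠ 0 := by
  intro h
  have := lead_abs m a
  rw [h] at this
  have := m.pos
  simp only [abs_zero] at *
  omega

theorem sol_dvd (m : ℕ+) (D : ℤ) (a : Sol m D) : (4 * lead m a.1) ∣ ((a.1.val : ℤ) ^ 2 - D) := by
  have h : ((4 * (m : ℕ) : ℕ) : ℤ) ∣ ((a.1.val : ℤ) ^ 2 - D) := by
    rw [← ZMod.intCast_zmod_eq_zero_iff_dvd]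
    push_cast
    rw [ZMod.natCast_zmod_val, a.2, sub_self]
  push_cast at h
  unfold lead
  split_ifs
  · exact h
  · rw [mul_neg]; exact (neg_dvd).2 h

theorem idisc_bform (m : ℕ+) (D : ℤ) (a : Sol m D) : idisc (bform m D a.1) = D := by
  obtain ⟨c, hc⟩ := sol_dvd m D a
  have h4 : (4 * lead m a.1) ≠ 0 := mul_ne_zero (by norm_num) (lead_ne m a.1)
  unfold idisc bform
  simp only
  rw [hc, Int.mul_ediv_cancel_left _ h4, ← hc]
  ring

theorem idisc_nsh (j : ℤ) (x) : idisc (nsh j x) = idisc x := by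
  unfold idisc nsh; ring

theorem form_inj {m m' : ℕ+} {D : ℤ} {a : ZMod (4 * (m : ℕ))} {a' : ZMod (4 * (m' : ℕ))} {j j' : ℤ}
    (h : nsh j (bform m D a) = nsh j' (bform m' D a')) : m = m' ∧ HEq a a' ∧ j = j' := by
  simp only [nsh, bform, Prod.mk.injEq] at h
  obtain ⟨h1, h2, -⟩ := h
  have hm : m = m' := by
    have e1 := lead_abs m a
    rw [h1, lead_abs] at e1
    exact PNat.coe_injective (by exact_mod_cast e1.symm)
  subst hm
  have hl := lead_ne m a
  rw [← h1] at h2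
  have hva := ZMod.val_lt a
  have hva' := ZMod.val_lt a'
  have hmp : (0 : ℤ) < m := by exact_mod_cast m.pos
  have hj : j = j' := by
    have h3 : (a.val : ℤ) - a'.val = 2 * (m : ℤ) * (if a.val < 2 * (m : ℕ) then (j' - j) else (j - j')) := by
      unfold lead at h2
      split_ifs at h2 ⊢ <;> linarith
    have h4 : |(a.val : ℤ) - a'.val| < 2 * (m : ℤ) := by
      unfold lead at h1
      rw [abs_lt]
      split_ifs at h1 with c1 c2 c2
      · constructor <;> omega
      · omega
      · omega
      · constructor <;> omega
    rw [h3, abs_mul, abs_of_pos (by positivity)] at h4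
    have h5 : |(if a.val < 2 * (m : ℕ) then (j' - j) else (j - j'))| < 1 := by
      by_contra hc
      push Not at hc
      nlinarith
    rw [Int.abs_lt_one_iff] at h5
    split_ifs at h5 <;> omega
  subst hj
  refine ⟨rfl, ?_, rfl⟩
  apply heq_of_eq
  apply ZMod.val_injective
  have : (a.val : ℤ) = a'.val := by linarith
  exact_mod_cast this

theorem form_surj (x : ℤ × ℤ × ℤ) (hx : x.1 ≠ 0) (D : ℤ) (hD : idisc x = D) :
    ∃ (m : ℕ+) (a : Sol m D) (j : ℤ), nsh j (bform m D a.1) = x := by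
  obtain ⟨x1, x2, x3⟩ := x
  simp only at hx
  have hDe : D = x2 ^ 2 - 4 * x1 * x3 := hD.symm
  let m : ℕ+ := ⟨x1.natAbs, Int.natAbs_pos.2 hx⟩
  have hm : (m : ℤ) = |x1| := by simp [m]
  have hmp : (0 : ℤ) < m := by exact_mod_cast m.pos
  let r : ℤ := x2 % (2 * (m : ℤ)) + (if 0 < x1 then (0 : ℤ) else 2 * (m : ℤ))
  have hr0 : 0 ≤ x2 % (2 * m) := Int.emod_nonneg _ (by positivity)
  have hr1 : x2 % (2 * m) < 2 * m := Int.emod_lt_of_pos _ (by positivity)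
  have hrn : 0 ≤ r := by simp only [r]; split_ifs <;> omega
  have hr4 : r < 4 * m := by simp only [r]; split_ifs <;> omega
  obtain ⟨n, hn⟩ := Int.eq_ofNat_of_zero_le hrn
  have hval : ((n : ZMod (4 * (m:ℕ)))).val = n := by
    rw [ZMod.val_natCast, Nat.mod_eq_of_lt]
    zify; rw [← hn]; exact hr4
  have hlead : lead m (n : ZMod (4 * (m:ℕ))) = x1 := by
    unfold lead
    rw [hval]
    rcases lt_or_gt_of_ne hx with h | h
    · have h' : ¬ (0 < x1) := by omega
      rw [if_neg, hm, abs_of_neg h]; · ring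
      simp only [r, if_neg h'] at hn
      omega
    · rw [if_pos, hm, abs_of_pos h]
      simp only [r, if_pos h] at hn
      omega
  have hdv : 2 * x1 ∣ x2 - r := by
    have : 2 * (m:ℤ) ∣ x2 - r := by
      have h := Int.mul_ediv_add_emod x2 (2 * m)
      simp only [r]
      split_ifs
      · exact ⟨x2 / (2 * m), by linarith⟩
      · exact ⟨x2 / (2 * m) - 1, by linarith⟩
    rw [hm] at this
    rwa [← abs_two, ← abs_mul, abs_dvd] at this
  obtain ⟨j, hj⟩ := hdv
  have hsq : (r : ℤ) ^ 2 - D = 4 * x1 * (x3 - j * r - j ^ 2 * x1) := by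
    have : x2 = r + 2 * x1 * j := by linarith
    rw [hDe, this]; ring
  have hsol : ((n : ZMod (4 * (m:ℕ)))) ^ 2 = (D : ZMod (4 * (m : ℕ))) := by
    have h1 : ((4 * (m : ℕ) : ℕ) : ℤ) ∣ (n : ℤ) ^ 2 - D := by
      have e : (r : ℤ) = n := hn
      rw [← e, hsq]; push_cast; rw [hm]
      have : 4 * |x1| ∣ 4 * x1 := mul_dvd_mul_left _ ((abs_dvd _ _).2 dvd_rfl)
      exact this.mul_right _
    rw [← ZMod.intCast_zmod_eq_zero_iff_dvd] at h1
    push_cast at h1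
    exact sub_eq_zero.1 h1
  refine ⟨m, ⟨_, hsol⟩, j, ?_⟩
  simp only [nsh, bform, hlead, hval]
  have e : ((n : ℕ) : ℤ) = r := hn.symm
  rw [e, hsq, Int.mul_ediv_cancel_left _ (mul_ne_zero (by norm_num) hx)]
  ext
  · rfl
  · simp only; linarith
  · simp only; ring

/-- index of the arithmetic data: `(k, ε, D, m, n)` -/
abbrev Cidx : Type := ℕ+ × Bool × ℕ+ × ℕ+ × ℕ+

abbrev cD (c : Cidx) : ℤ := sg c.2.1 * (c.2.2.1 : ℤ)

abbrev Ridx : Type := Σ c : Cidx, Sol c.2.2.2.1 (cD c) × Sol c.2.2.2.2 (cD c)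

theorem cD_ne (c : Cidx) : cD c ≠ 0 := by
  have := c.2.2.1.ne_zero
  simp only [cD, sg]; split_ifs <;> simp

def rpt (r : Ridx) : (ℤ × ℤ × ℤ) × (ℤ × ℤ × ℤ) :=
  (bform r.1.2.2.2.1 (cD r.1) r.2.1.1, bform r.1.2.2.2.2 (cD r.1) r.2.2.1)

def spt (i : Ridx × (ℤ × ℤ)) : (ℤ × ℤ × ℤ) × (ℤ × ℤ × ℤ) :=
  (nsh i.2.1 (rpt i.1).1, nsh i.2.2 (rpt i.1).2)

theorem mem_Lset_iff (x y : ℤ × ℤ × ℤ) : (x, y) ∈ Lset ↔ idisc x = idisc y ∧ x.1 * y.1 * idisc x ≠ 0 := Iff.rfl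

theorem spt_mem (i) : spt i ∈ Lset := by
  obtain ⟨⟨c, a, b⟩, j, l⟩ := i
  unfold spt rpt
  rw [mem_Lset_iff, idisc_nsh, idisc_nsh, idisc_bform, idisc_bform]
  exact ⟨rfl, mul_ne_zero (mul_ne_zero (lead_ne _ _) (lead_ne _ _)) (cD_ne c)⟩

theorem sg_inj {b b' : Bool} {D D' : ℕ+} (h : sg b * (D : ℤ) = sg b' * (D' : ℤ)) : b = b' ∧ D = D' := by
  have := D.pos
  have := D'.pos
  have h2 : b = b' ∧ (D:ℕ) = D' := by
    cases b <;> cases b' <;> simp [sg] at h ⊢ <;> omega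
  exact ⟨h2.1, PNat.coe_injective h2.2⟩

def bigMap (i : Ridx × (ℤ × ℤ)) : ℕ+ × Lset := (i.1.1.1, ⟨spt i, spt_mem i⟩)

theorem bigMap_bij : Function.Bijective bigMap := by
  constructor
  · rintro ⟨⟨⟨k, e, D, m, n⟩, a, b⟩, j, l⟩ ⟨⟨⟨k', e', D', m', n'⟩, a', b'⟩, j', l'⟩ h
    simp only [bigMap, Prod.mk.injEq, Subtype.mk.injEq] at h
    obtain ⟨rfl, h⟩ := h
    simp only [spt, rpt, Prod.mk.injEq] at h
    obtain ⟨h1, h2⟩ := h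
    have hd := congrArg idisc h1
    rw [idisc_nsh, idisc_nsh, idisc_bform, idisc_bform] at hd
    obtain ⟨rfl, rfl⟩ := sg_inj hd
    obtain ⟨rfl, ha, rfl⟩ := form_inj h1
    obtain ⟨rfl, hb, rfl⟩ := form_inj h2
    have ha' := Subtype.ext (eq_of_heq ha)
    have hb' := Subtype.ext (eq_of_heq hb)
    subst ha' hb'
    rfl
  · rintro ⟨k, ⟨⟨x, y⟩, hxy⟩⟩
    have h := (mem_Lset_iff x y).1 hxy
    obtain ⟨hd, hne⟩ := h
    have hD0 : idisc x ≠ 0 := right_ne_zero_of_mul hne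
    have hx0 : x.1 ≠ 0 := left_ne_zero_of_mul (left_ne_zero_of_mul hne)
    have hy0 : y.1 ≠ 0 := right_ne_zero_of_mul (left_ne_zero_of_mul hne)
    obtain ⟨e, D, hD⟩ : ∃ (e : Bool) (D : ℕ+), idisc x = sg e * (D : ℤ) := by
      rcases lt_or_gt_of_ne hD0 with h | h
      · exact ⟨false, ⟨(idisc x).natAbs, Int.natAbs_pos.2 hD0⟩, by simp [sg, abs_of_neg h]⟩
      · exact ⟨true, ⟨(idisc x).natAbs, Int.natAbs_pos.2 hD0⟩, by simp [sg, abs_of_pos h]⟩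
    obtain ⟨m, a, j, hj⟩ := form_surj x hx0 _ hD
    obtain ⟨n, b, l, hl⟩ := form_surj y hy0 _ (hd.symm.trans hD)
    refine ⟨⟨⟨(k, e, D, m, n), a, b⟩, j, l⟩, ?_⟩
    simp only [bigMap, spt, rpt, Prod.mk.injEq, Subtype.mk.injEq, true_and]
    exact ⟨hj, hl⟩

theorem summable_div (σ : ℝ) (h : 1 < σ) :
    Summable (fun n : ℕ => (n.divisors.card : ℝ) * (n : ℝ) ^ (-σ)) := by
  have hz : LSeriesSummable (fun n => (ArithmeticFunction.zeta n : ℂ)) (σ : ℂ) :=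
    ArithmeticFunction.LSeriesSummable_zeta_iff.2 (by simpa using h)
  have h2 := ArithmeticFunction.LSeriesSummable_mul (f := (ArithmeticFunction.zeta : ArithmeticFunction ℂ))
    (g := (ArithmeticFunction.zeta : ArithmeticFunction ℂ)) (s := (σ : ℂ)) (by simpa using hz) (by simpa using hz)
  have h3 := h2.norm
  refine h3.congr ?_
  intro n
  rcases Nat.eq_zero_or_pos n with rfl | hn
  · simp
  rw [LSeries.norm_term_eq, if_neg hn.ne', ArithmeticFunction.coe_zeta_mul_apply]
  have : ∑ i ∈ n.divisors, ((ArithmeticFunction.zeta : ArithmeticFunction ℂ) i) = (n.divisors.card : ℂ) := by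
    rw [Finset.card_eq_sum_ones, Nat.cast_sum]
    refine Finset.sum_congr rfl fun i hi => ?_
    simp [ArithmeticFunction.natCoe_apply, ArithmeticFunction.zeta_apply, (Nat.pos_of_mem_divisors hi).ne']
  rw [this, Complex.norm_natCast, Complex.ofReal_re, Real.rpow_neg (by positivity)]
  rfl

theorem summable_div4 (σ : ℝ) (h : 1 < σ) :
    Summable (fun m : ℕ+ => ((4 * (m : ℕ)).divisors.card : ℝ) * (m : ℝ) ^ (-σ)) := by
  have h1 : Function.Injective (fun m : ℕ+ => 4 * (m : ℕ)) := by
    intro a b hab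
    apply PNat.coe_injective
    simp only at hab; omega
  have h2 := ((summable_div σ h).comp_injective h1).mul_left ((4 : ℝ) ^ σ)
  refine h2.congr fun m => ?_
  simp only [Function.comp]
  push_cast
  rw [Real.mul_rpow (by norm_num) (by positivity), Real.rpow_neg (by norm_num : (0:ℝ) ≤ 4)]
  have : (4 : ℝ) ^ σ ≠ 0 := by positivity
  field_simp

def cf (s₁ s₂ w : ℂ) (k D m n : ℕ+) : ℂ :=
  (k : ℂ) * ((((k : ℝ) * (m : ℝ) : ℝ) : ℂ) ^ (-s₁)) * ((((k : ℝ) * (n : ℝ) : ℝ) : ℂ) ^ (-s₂)) *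
    ((((k : ℝ) ^ 2 * (D : ℝ) / 4 : ℝ) : ℂ) ^ (-w))

theorem ppos (k : ℕ+) : (0 : ℝ) < (k : ℝ) := by exact_mod_cast k.pos

theorem norm_cf (s₁ s₂ w : ℂ) (k D m n : ℕ+) : ‖cf s₁ s₂ w k D m n‖ =
    (k : ℝ) * ((k : ℝ) * (m : ℝ)) ^ (-s₁.re) * ((k : ℝ) * (n : ℝ)) ^ (-s₂.re) *
      ((k : ℝ) ^ 2 * (D : ℝ) / 4) ^ (-w.re) := by
  have := ppos k
  have := ppos D
  have := ppos m
  have := ppos n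
  unfold cf
  rw [norm_mul, norm_mul, norm_mul, Complex.norm_cpow_eq_rpow_re_of_pos (by positivity),
    Complex.norm_cpow_eq_rpow_re_of_pos (by positivity), Complex.norm_cpow_eq_rpow_re_of_pos (by positivity)]
  simp

theorem summable_pnat_rpow (p : ℝ) (hp : p < -1) : Summable (fun k : ℕ+ => (k : ℝ) ^ p) :=
  (Real.summable_nat_rpow.2 hp).comp_injective PNat.coe_injective

theorem summable_cf (s₁ s₂ w : ℂ) (h1 : 1 < s₁.re) (h2 : 1 < s₂.re) (h3 : 3 < w.re) (ε : ℤ) (hε : |ε| = 1) :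
    Summable (fun c : ℕ+ × ℕ+ × ℕ+ × ℕ+ =>
      ((A (4 * (c.2.2.1 : ℕ)) (ε * (c.2.1 : ℤ)) : ℝ) * (A (4 * (c.2.2.2 : ℕ)) (ε * (c.2.1 : ℤ)) : ℝ)) *
       ‖cf s₁ s₂ w c.1 c.2.1 c.2.2.1 c.2.2.2‖) := by
  have hk := summable_pnat_rpow (1 - s₁.re - s₂.re - 2 * w.re) (by linarith)
  have hD := summable_pnat_rpow (2 - w.re) (by linarith)
  have hm := summable_div4 s₁.re h1
  have hn := summable_div4 s₂.re h2
  have hmn := hm.mul_of_nonneg hn (fun _ => by positivity) (fun _ => by positivity)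
  have hDmn := hD.mul_of_nonneg hmn (fun _ => by positivity) (fun _ => by positivity)
  have hall := hk.mul_of_nonneg hDmn (fun _ => by positivity) (fun _ => by positivity)
  refine Summable.of_nonneg_of_le (fun _ => by positivity) ?_ (hall.mul_left (4 * (4 : ℝ) ^ (w.re)))
  rintro ⟨k, D, m, n⟩
  simp only
  have hk0 := ppos k
  have hD0 := ppos D
  have hm0 := ppos m
  have hn0 := ppos n
  have hDz : ε * (D : ℤ) ≠ 0 := by
    refine mul_ne_zero ?_ (by exact_mod_cast D.ne_zero)
    rintro rfl; simp at hε
  have hDa : ((ε * (D : ℤ)).natAbs : ℝ) = D := by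
    rw [Nat.cast_natAbs, abs_mul, hε]; simp
  have ha := A_le (4 * (m : ℕ)) (by positivity) _ hDz
  have hb := A_le (4 * (n : ℕ)) (by positivity) _ hDz
  have ha' : (A (4 * (m : ℕ)) (ε * (D : ℤ)) : ℝ) ≤ ((4 * (m : ℕ)).divisors.card : ℝ) * (2 * D) := by
    rw [← hDa]; exact_mod_cast ha
  have hb' : (A (4 * (n : ℕ)) (ε * (D : ℤ)) : ℝ) ≤ ((4 * (n : ℕ)).divisors.card : ℝ) * (2 * D) := by
    rw [← hDa]; exact_mod_cast hb
  rw [norm_cf]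
  refine le_trans (mul_le_mul_of_nonneg_right (mul_le_mul ha' hb' (by positivity) (by positivity)) (by positivity)) ?_
  apply le_of_eq
  rw [Real.mul_rpow hk0.le hm0.le, Real.mul_rpow hk0.le hn0.le, Real.div_rpow (by positivity) (by norm_num),
    Real.mul_rpow (by positivity) hD0.le, ← Real.rpow_natCast, ← Real.rpow_mul hk0.le,
    Real.rpow_neg (by norm_num : (0:ℝ) ≤ 4)]
  have e1 : (k : ℝ) ^ (1 - s₁.re - s₂.re - 2 * w.re) =
      k * (k : ℝ) ^ (-s₁.re) * (k : ℝ) ^ (-s₂.re) * (k : ℝ) ^ (((2 : ℕ) : ℝ) * -w.re) := by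
    rw [show (1 - s₁.re - s₂.re - 2 * w.re) = 1 + (-s₁.re) + (-s₂.re) + (((2 : ℕ) : ℝ) * -w.re) by push_cast; ring,
      Real.rpow_add hk0, Real.rpow_add hk0, Real.rpow_add hk0, Real.rpow_one]
  have e2 : (D : ℝ) ^ (2 - w.re) = D * D * (D : ℝ) ^ (-w.re) := by
    rw [show 2 - w.re = 1 + 1 + (-w.re) by ring, Real.rpow_add hD0, Real.rpow_add hD0, Real.rpow_one]
  rw [e1, e2]
  field_simp
  ring

def dset (q : ℕ+ × ℕ+ × ℕ+) : Finset ℕ :=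
  (q.2.1 : ℕ).divisors.filter (fun d : ℕ => (d : ℤ) ^ 2 ∣ ((q.1 : ℕ) : ℤ) ∧ d ∣ (q.2.2 : ℕ))

theorem mem_dset (q d) : d ∈ dset q ↔ d ∣ (q.2.1 : ℕ) ∧ d ^ 2 ∣ (q.1 : ℕ) ∧ d ∣ (q.2.2 : ℕ) := by
  simp only [dset, Finset.mem_filter, Nat.mem_divisors]
  have : (d : ℤ) ^ 2 ∣ ((q.1 : ℕ) : ℤ) ↔ d ^ 2 ∣ (q.1 : ℕ) := by
    rw [← Int.natCast_dvd_natCast]; push_cast; rfl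
  rw [this]
  simp

def rgMap (c : ℕ+ × ℕ+ × ℕ+ × ℕ+) : Σ q : ℕ+ × ℕ+ × ℕ+, {d // d ∈ dset q} :=
  ⟨(c.1 ^ 2 * c.2.1, c.1 * c.2.2.1, c.1 * c.2.2.2), (c.1 : ℕ), by
    rw [mem_dset]; simp⟩

theorem rgMap_bij : Function.Bijective rgMap := by
  constructor
  · rintro ⟨k, D, m, n⟩ ⟨k', D', m', n'⟩ h
    have h0 : k = k' := by
      apply PNat.coe_injective
      have := congrArg (fun z : (Σ q : ℕ+ × ℕ+ × ℕ+, {d // d ∈ dset q}) => z.2.1) h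
      exact this
    subst h0
    have h1 := congrArg (fun z : (Σ q : ℕ+ × ℕ+ × ℕ+, {d // d ∈ dset q}) => z.1) h
    simp only [rgMap, Prod.mk.injEq, mul_right_inj] at h1
    obtain ⟨rfl, rfl, rfl⟩ := h1
    rfl
  · rintro ⟨⟨D, m, n⟩, d, hd⟩
    have h := (mem_dset _ _).1 hd
    simp only at h
    obtain ⟨⟨m', hm⟩, ⟨D', hD⟩, ⟨n', hn⟩⟩ := h
    have hd0 : 0 < d := by
      rcases Nat.eq_zero_or_pos d with rfl | h
      · simp at hm
      · exact h
    have hm0 : 0 < m' := by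
      rcases Nat.eq_zero_or_pos m' with rfl | h
      · simp at hm
      · exact h
    have hn0 : 0 < n' := by
      rcases Nat.eq_zero_or_pos n' with rfl | h
      · simp at hn
      · exact h
    have hD0 : 0 < D' := by
      rcases Nat.eq_zero_or_pos D' with rfl | h
      · simp at hD
      · exact h
    lift d to ℕ+ using hd0
    lift m' to ℕ+ using hm0
    lift n' to ℕ+ using hn0
    lift D' to ℕ+ using hD0
    have eD : D = d ^ 2 * D' := PNat.coe_injective (by rw [PNat.mul_coe, PNat.pow_coe]; exact hD)
    have em : m = d * m' := PNat.coe_injective hm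
    have en : n = d * n' := PNat.coe_injective hn
    subst eD em en
    exact ⟨(d, D', m', n'), rfl⟩

theorem regroup (s₁ s₂ w : ℂ) (ε : ℤ)
    (hs : Summable (fun c : ℕ+ × ℕ+ × ℕ+ × ℕ+ =>
      ((A (4 * (c.2.2.1 : ℕ)) (ε * (c.2.1 : ℤ)) : ℂ) * (A (4 * (c.2.2.2 : ℕ)) (ε * (c.2.1 : ℤ)) : ℂ)) *
       cf s₁ s₂ w c.1 c.2.1 c.2.2.1 c.2.2.2)) :
    ∑' c : ℕ+ × ℕ+ × ℕ+ × ℕ+,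
      ((A (4 * (c.2.2.1 : ℕ)) (ε * (c.2.1 : ℤ)) : ℂ) * (A (4 * (c.2.2.2 : ℕ)) (ε * (c.2.1 : ℤ)) : ℂ)) *
       cf s₁ s₂ w c.1 c.2.1 c.2.2.1 c.2.2.2 = (4 : ℂ) ^ w * xiMDS ε s₁ s₂ w := by
  let g : (Σ q : ℕ+ × ℕ+ × ℕ+, {d // d ∈ dset q}) → ℂ := fun z =>
    (4 : ℂ) ^ w * (((z.2.1 * A (4 * (z.1.2.1 : ℕ) / z.2.1) (ε * ((z.1.1 : ℕ) : ℤ) / (z.2.1 : ℤ) ^ 2)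
      * A (4 * (z.1.2.2 : ℕ) / z.2.1) (ε * ((z.1.1 : ℕ) : ℤ) / (z.2.1 : ℤ) ^ 2) : ℕ) : ℂ) /
      (((z.1.2.1 : ℕ) : ℂ) ^ s₁ * ((z.1.2.2 : ℕ) : ℂ) ^ s₂ * ((z.1.1 : ℕ) : ℂ) ^ w))
  let e := Equiv.ofBijective rgMap rgMap_bij
  have hge : ∀ c : ℕ+ × ℕ+ × ℕ+ × ℕ+, ((A (4 * (c.2.2.1 : ℕ)) (ε * (c.2.1 : ℤ)) : ℂ) * (A (4 * (c.2.2.2 : ℕ)) (ε * (c.2.1 : ℤ)) : ℂ)) *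
       cf s₁ s₂ w c.1 c.2.1 c.2.2.1 c.2.2.2 = g (e c) := by
    rintro ⟨k, D, m, n⟩
    have hk0 := ppos k
    have hD0 := ppos D
    have hkn := k.pos
    simp only [g, e, Equiv.ofBijective_apply, rgMap]
    have i1 : 4 * ((k * m : ℕ+) : ℕ) / (k : ℕ) = 4 * m := by
      rw [PNat.mul_coe, show 4 * ((k : ℕ) * m) = k * (4 * m) by ring, Nat.mul_div_cancel_left _ hkn]
    have i2 : 4 * ((k * n : ℕ+) : ℕ) / (k : ℕ) = 4 * n := by
      rw [PNat.mul_coe, show 4 * ((k : ℕ) * n) = k * (4 * n) by ring, Nat.mul_div_cancel_left _ hkn]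
    have i3 : ε * (((k ^ 2 * D : ℕ+) : ℕ) : ℤ) / ((k : ℕ) : ℤ) ^ 2 = ε * (D : ℤ) := by
      rw [PNat.mul_coe, PNat.pow_coe]; push_cast
      rw [show ε * ((k : ℤ) ^ 2 * (D : ℤ)) = (k : ℤ) ^ 2 * (ε * (D : ℤ)) by ring, Int.mul_ediv_cancel_left]
      have : (k : ℤ) ≠ 0 := by exact_mod_cast k.ne_zero
      positivity
    rw [i1, i2, i3]
    unfold cf
    have j3 : ((((k : ℝ) ^ 2 * (D : ℝ) / 4 : ℝ) : ℂ) ^ (-w)) = (4 : ℂ) ^ w / (((k : ℝ) ^ 2 * (D : ℝ) : ℝ) : ℂ) ^ w := by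
      rw [Complex.cpow_neg, div_eq_mul_inv ((k : ℝ) ^ 2 * (D : ℝ)), Complex.ofReal_mul, Complex.mul_cpow_ofReal_nonneg (by positivity) (by positivity)]
      rw [mul_inv, mul_comm, div_eq_mul_inv]
      congr 1
      rw [Complex.ofReal_inv, Complex.inv_cpow, inv_inv]
      · norm_num
      · rw [Complex.arg_ofReal_of_nonneg (by norm_num)]; exact Real.pi_pos.ne
    rw [j3, Complex.cpow_neg, Complex.cpow_neg]
    push_cast
    simp only [div_eq_mul_inv, mul_inv]
    ring
  rw [tsum_congr hge, e.tsum_eq g]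
  have hsg : Summable g := by
    rw [← e.summable_iff]; exact hs.congr hge
  rw [hsg.tsum_sigma]
  have hin : ∀ q : ℕ+ × ℕ+ × ℕ+, ∑' d, g ⟨q, d⟩ = (4 : ℂ) ^ w * ((Anum ε q.1 q.2.1 q.2.2 : ℂ) /
      (((q.2.1 : ℕ) : ℂ) ^ s₁ * ((q.2.2 : ℕ) : ℂ) ^ s₂ * ((q.1 : ℕ) : ℂ) ^ w)) := by
    intro q
    simp only [g]
    rw [tsum_mul_left, tsum_div_const]
    congr 2
    rw [Finset.tsum_subtype (dset q) (fun d : ℕ => (((d * A (4 * (q.2.1 : ℕ) / d) (ε * ((q.1 : ℕ) : ℤ) / (d : ℤ) ^ 2)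
      * A (4 * (q.2.2 : ℕ) / d) (ε * ((q.1 : ℕ) : ℤ) / (d : ℤ) ^ 2) : ℕ) : ℂ)))]
    rw [← Nat.cast_sum]
    rfl
  rw [tsum_congr hin, tsum_mul_left]
  congr 1
  unfold xiMDS
  let e3 : ℕ × ℕ × ℕ ≃ ℕ+ × ℕ+ × ℕ+ :=
    Equiv.prodCongr Equiv.pnatEquivNat.symm (Equiv.prodCongr Equiv.pnatEquivNat.symm Equiv.pnatEquivNat.symm)
  rw [← e3.tsum_eq]
  rfl

def Wt (s₁ s₂ w : ℂ) (p : Param) : ℂ :=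
  ((p.1 ^ 2 * p.2.1 ^ 2 : ℝ) : ℂ) ^ s₁ * ((p.1 ^ 2 * p.2.2.1 ^ 2 : ℝ) : ℂ) ^ s₂ *
    ((p.1 : ℝ) : ℂ) ^ (4 * w) * (((p.2.1 ^ 3 * p.2.2.1 ^ 3 * p.1)⁻¹ : ℝ) : ℂ)

def psi (h p : Param) : Param :=
  (h.1 * p.1, h.2.1 * p.2.1, h.2.2.1 * p.2.2.1, h.2.1 ^ 2 * p.2.2.2.1 + h.2.2.2.1,
    h.2.2.1 ^ 2 * p.2.2.2.2 + h.2.2.2.2)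

def Ppos (p : Param) : Prop := 0 < p.1 ∧ 0 < p.2.1 ∧ 0 < p.2.2.1

theorem mem_Phi (p : Param) : p ∈ Phidomain ↔ Ppos p := by
  simp [Phidomain, Ppos]

theorem map_aff (c e : ℝ) (hc : 0 < c) :
    Measure.map (fun x : ℝ => c * x + e) volume = ENNReal.ofReal c⁻¹ • (volume : Measure ℝ) := by
  have h1 : (fun x : ℝ => c * x + e) = (fun x => x + e) ∘ (fun x => c * x) := rfl
  rw [h1, ← Measure.map_map (by fun_prop) (by fun_prop), Real.map_volume_mul_left hc.ne',
    Measure.map_smul, (measurePreserving_add_right volume e).map_eq, abs_of_pos (by positivity)]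

theorem map_mulc (c : ℝ) (hc : 0 < c) :
    Measure.map (fun x : ℝ => c * x) volume = ENNReal.ofReal c⁻¹ • (volume : Measure ℝ) := by
  rw [Real.map_volume_mul_left hc.ne', abs_of_pos (by positivity)]

theorem map_psi (h : Param) (hh : Ppos h) : Measure.map (psi h) volume =
    ENNReal.ofReal ((h.1 * h.2.1 ^ 3 * h.2.2.1 ^ 3)⁻¹) • (volume : Measure Param) := by
  obtain ⟨h1, h2, h3⟩ := hh
  have e : psi h = Prod.map (fun x => h.1 * x) (Prod.map (fun x => h.2.1 * x) (Prod.map (fun x => h.2.2.1 * x)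
    (Prod.map (fun x => h.2.1 ^ 2 * x + h.2.2.2.1) (fun x => h.2.2.1 ^ 2 * x + h.2.2.2.2)))) := rfl
  have q1 := map_aff (h.2.1 ^ 2) h.2.2.2.1 (by positivity)
  have q2 := map_aff (h.2.2.1 ^ 2) h.2.2.2.2 (by positivity)
  have q3 := map_mulc _ h1
  have q4 := map_mulc _ h2
  have q5 := map_mulc _ h3
  have m1 : Measure.map (Prod.map (fun x => h.2.1 ^ 2 * x + h.2.2.2.1) (fun x => h.2.2.1 ^ 2 * x + h.2.2.2.2))
      (volume : Measure (ℝ × ℝ)) = ENNReal.ofReal ((h.2.1 ^ 2)⁻¹ * (h.2.2.1 ^ 2)⁻¹) • volume := by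
    rw [Measure.volume_eq_prod, ← Measure.map_prod_map _ _ (by fun_prop) (by fun_prop), q1, q2,
      Measure.prod_smul_left, Measure.prod_smul_right, smul_smul, ← ENNReal.ofReal_mul (by positivity)]
  have m2 : Measure.map (Prod.map (fun x => h.2.2.1 * x)
    (Prod.map (fun x => h.2.1 ^ 2 * x + h.2.2.2.1) (fun x => h.2.2.1 ^ 2 * x + h.2.2.2.2)))
      (volume : Measure (ℝ × ℝ × ℝ)) = ENNReal.ofReal (h.2.2.1⁻¹ * ((h.2.1 ^ 2)⁻¹ * (h.2.2.1 ^ 2)⁻¹)) • volume := by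
    rw [Measure.volume_eq_prod, ← Measure.map_prod_map _ _ (by fun_prop) (by fun_prop), q5, m1,
      Measure.prod_smul_left, Measure.prod_smul_right, smul_smul, ← ENNReal.ofReal_mul (by positivity)]
  have m3 : Measure.map (Prod.map (fun x => h.2.1 * x) (Prod.map (fun x => h.2.2.1 * x)
    (Prod.map (fun x => h.2.1 ^ 2 * x + h.2.2.2.1) (fun x => h.2.2.1 ^ 2 * x + h.2.2.2.2))))
      (volume : Measure (ℝ × ℝ × ℝ × ℝ)) =
        ENNReal.ofReal (h.2.1⁻¹ * (h.2.2.1⁻¹ * ((h.2.1 ^ 2)⁻¹ * (h.2.2.1 ^ 2)⁻¹))) • volume := by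
    rw [Measure.volume_eq_prod, ← Measure.map_prod_map _ _ (by fun_prop) (by fun_prop), q4, m2,
      Measure.prod_smul_left, Measure.prod_smul_right, smul_smul, ← ENNReal.ofReal_mul (by positivity)]
  rw [e, Measure.volume_eq_prod, ← Measure.map_prod_map _ _ (by fun_prop) (by fun_prop), q3, m3,
      Measure.prod_smul_left, Measure.prod_smul_right, smul_smul, ← ENNReal.ofReal_mul (by positivity)]
  congr 2
  field_simp

theorem psi_emb (h : Param) (hh : Ppos h) : MeasurableEmbedding (psi h) := by
  obtain ⟨h1, h2, h3⟩ := hh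
  have hm : Measurable (psi h) := by unfold psi; fun_prop
  let e : Param ≃ᵐ Param :=
    { toFun := psi h
      invFun := fun p => (h.1⁻¹ * p.1, h.2.1⁻¹ * p.2.1, h.2.2.1⁻¹ * p.2.2.1,
        (h.2.1 ^ 2)⁻¹ * (p.2.2.2.1 - h.2.2.2.1), (h.2.2.1 ^ 2)⁻¹ * (p.2.2.2.2 - h.2.2.2.2))
      left_inv := by
        rintro ⟨a, b, c, d, e⟩
        simp only [psi, Prod.mk.injEq]
        refine ⟨?_, ?_, ?_, ?_, ?_⟩ <;> field_simp <;> ring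
      right_inv := by
        rintro ⟨a, b, c, d, e⟩
        simp only [psi, Prod.mk.injEq]
        refine ⟨?_, ?_, ?_, ?_, ?_⟩ <;> field_simp <;> ring
      measurable_toFun := hm
      measurable_invFun := by
        simp only [Equiv.coe_fn_symm_mk]
        fun_prop }
  exact e.measurableEmbedding

theorem psi_pre (h : Param) (hh : Ppos h) : psi h ⁻¹' Phidomain = Phidomain := by
  obtain ⟨h1, h2, h3⟩ := hh
  ext p
  rw [Set.mem_preimage, mem_Phi, mem_Phi]
  simp [psi, Ppos, mul_pos_iff_of_pos_left, h1, h2, h3]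

theorem Phi_meas : MeasurableSet Phidomain := by
  unfold Phidomain
  measurability

theorem act_psi (h p : Param) (hh : Ppos h) (hp : Ppos p) (x : Vsp) : act (psi h p) x = act p (act h x) := by
  obtain ⟨h1, h2, h3⟩ := hh
  obtain ⟨p1, p2, p3⟩ := hp
  obtain ⟨⟨a, b, c⟩, ⟨d, e, f⟩⟩ := x
  simp only [act, psi, rhoAct, Prod.mk.injEq]
  refine ⟨⟨?_, ?_, ?_⟩, ⟨?_, ?_, ?_⟩⟩ <;> field_simp <;> ring

theorem cpm {a b : ℝ} (ha : 0 < a) (hb : 0 < b) (s : ℂ) : ((a * b : ℝ) : ℂ) ^ s = (a : ℂ) ^ s * (b : ℂ) ^ s := by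
  rw [Complex.ofReal_mul, Complex.mul_cpow_ofReal_nonneg ha.le hb.le]

theorem Wt_psi (s₁ s₂ w : ℂ) (h p : Param) (hh : Ppos h) (hp : Ppos p) :
    Wt s₁ s₂ w (psi h p) = Wt s₁ s₂ w h * Wt s₁ s₂ w p := by
  obtain ⟨h1, h2, h3⟩ := hh
  obtain ⟨p1, p2, p3⟩ := hp
  simp only [Wt, psi]
  rw [show (h.1 * p.1) ^ 2 * (h.2.1 * p.2.1) ^ 2 = (h.1 ^ 2 * h.2.1 ^ 2) * (p.1 ^ 2 * p.2.1 ^ 2) by ring,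
    show (h.1 * p.1) ^ 2 * (h.2.2.1 * p.2.2.1) ^ 2 = (h.1 ^ 2 * h.2.2.1 ^ 2) * (p.1 ^ 2 * p.2.2.1 ^ 2) by ring,
    cpm (a := h.1 ^ 2 * h.2.1 ^ 2) (b := p.1 ^ 2 * p.2.1 ^ 2) (by positivity) (by positivity),
    cpm (a := h.1 ^ 2 * h.2.2.1 ^ 2) (b := p.1 ^ 2 * p.2.2.1 ^ 2) (by positivity) (by positivity), cpm h1 p1]
  push_cast
  simp only [mul_pow, mul_inv]
  ring

def xb (b : Bool) : Vsp := ((1, 0, -(sg b : ℝ)), (1, 0, -(sg b : ℝ)))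

theorem orbital (f : Vsp → ℂ) (s₁ s₂ w : ℂ) (x₀ : Vsp) (h : Param) (hh : Ppos h)
    (H : IntegrableOn (fun p => Wt s₁ s₂ w p * f (act p x₀)) Phidomain) :
    IntegrableOn (fun p => Wt s₁ s₂ w p * f (act p (act h x₀))) Phidomain ∧
    ∫ p in Phidomain, Wt s₁ s₂ w p * f (act p (act h x₀)) =
      (((h.1 ^ 2 * h.2.1 ^ 2 : ℝ) : ℂ) ^ (-s₁) * ((h.1 ^ 2 * h.2.2.1 ^ 2 : ℝ) : ℂ) ^ (-s₂) *
        ((h.1 : ℝ) : ℂ) ^ (-(4 * w))) * ∫ p in Phidomain, Wt s₁ s₂ w p * f (act p x₀) := by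
  have hh' := hh
  obtain ⟨h1, h2, h3⟩ := hh'
  set G : Param → ℂ := fun p => Wt s₁ s₂ w p * f (act p x₀) with hG
  have cne : ∀ (a : ℝ) (s : ℂ), 0 < a → (a : ℂ) ^ s ≠ 0 := by
    intro a s ha
    rw [Ne, Complex.cpow_eq_zero_iff]
    have : (a : ℂ) ≠ 0 := by exact_mod_cast ha.ne'
    tauto
  have hW : Wt s₁ s₂ w h ≠ 0 := by
    unfold Wt
    refine mul_ne_zero (mul_ne_zero (mul_ne_zero (cne _ _ (by positivity)) (cne _ _ (by positivity))) (cne _ _ h1)) ?_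
    have : ((h.2.1 ^ 3 * h.2.2.1 ^ 3 * h.1)⁻¹ : ℝ) ≠ 0 := by positivity
    exact_mod_cast this
  have key : ∀ p ∈ Phidomain, Wt s₁ s₂ w p * f (act p (act h x₀)) = (Wt s₁ s₂ w h)⁻¹ * G (psi h p) := by
    intro p hp
    rw [mem_Phi] at hp
    simp only [hG]
    rw [act_psi h p hh hp, Wt_psi _ _ _ h p hh hp]
    field_simp
  have hemb := psi_emb h hh
  have hcp : (0 : ℝ) ≤ (h.1 * h.2.1 ^ 3 * h.2.2.1 ^ 3)⁻¹ := by positivity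
  have I1 : IntegrableOn G Phidomain (Measure.map (psi h) volume) := by
    rw [map_psi h hh, IntegrableOn, Measure.restrict_smul]
    exact Integrable.smul_measure H ENNReal.ofReal_ne_top
  have I2 : IntegrableOn (G ∘ psi h) Phidomain := by
    rw [hemb.integrableOn_map_iff, psi_pre h hh] at I1
    exact I1
  constructor
  · refine (I2.const_mul (Wt s₁ s₂ w h)⁻¹).congr ?_
    refine (ae_restrict_iff' Phi_meas).2 (ae_of_all _ fun p hp => ?_)
    exact (key p hp).symm
  · rw [setIntegral_congr_fun Phi_meas key, integral_const_mul]
    have I3 := hemb.setIntegral_map (μ := volume) G Phidomain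
    rw [psi_pre h hh] at I3
    rw [← I3, map_psi h hh, Measure.restrict_smul, integral_smul_measure, ENNReal.toReal_ofReal hcp,
      Complex.real_smul, ← mul_assoc]
    congr 1
    unfold Wt
    rw [Complex.cpow_neg, Complex.cpow_neg, Complex.cpow_neg]
    have h1' : (h.1 : ℂ) ≠ 0 := by exact_mod_cast h1.ne'
    have h2' : (h.2.1 : ℂ) ≠ 0 := by exact_mod_cast h2.ne'
    have h3' : (h.2.2.1 : ℂ) ≠ 0 := by exact_mod_cast h3.ne'
    simp only [mul_inv]
    push_cast
    field_simp

theorem orb_exists (b : Bool) (x y : ℝ × ℝ × ℝ) (Δ : ℝ) (hΔ : 0 < Δ) (hx : 0 < x.1) (hy : 0 < y.1)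
    (dx : x.2.1 ^ 2 - 4 * x.1 * x.2.2 = sg b * Δ) (dy : y.2.1 ^ 2 - 4 * y.1 * y.2.2 = sg b * Δ) :
    ∃ h, Ppos h ∧ act h (xb b) = (x, y) ∧ h.1 ^ 2 * h.2.1 ^ 2 = x.1 ∧ h.1 ^ 2 * h.2.2.1 ^ 2 = y.1 ∧
      h.1 ^ 4 = Δ / 4 := by
  obtain ⟨x1, x2, x3⟩ := x
  obtain ⟨y1, y2, y3⟩ := y
  simp only at hx hy dx dy
  obtain ⟨m, hm, hm4⟩ : ∃ m : ℝ, 0 < m ∧ m ^ 4 = Δ / 4 := by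
    refine ⟨√(√(Δ / 4)), by positivity, ?_⟩
    rw [show 4 = 2 * 2 by norm_num, pow_mul, Real.sq_sqrt (by positivity), Real.sq_sqrt (by positivity)]
  obtain ⟨a, ha, ha2⟩ : ∃ a : ℝ, 0 < a ∧ a ^ 2 = x1 := ⟨√x1, by positivity, Real.sq_sqrt hx.le⟩
  obtain ⟨c, hc, hc2⟩ : ∃ a : ℝ, 0 < a ∧ a ^ 2 = y1 := ⟨√y1, by positivity, Real.sq_sqrt hy.le⟩
  have hΔ' : Δ = 4 * m ^ 4 := by linarith
  subst hΔ' ha2 hc2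
  refine ⟨(m, a / m, c / m, x2 / (2 * m ^ 2), y2 / (2 * m ^ 2)), ⟨hm, by simp only; positivity, by simp only; positivity⟩, ?_, ?_, ?_, hm4⟩
  · simp only [act, rhoAct, xb, Prod.mk.injEq]
    refine ⟨⟨?_, ?_, ?_⟩, ⟨?_, ?_, ?_⟩⟩ <;> field_simp <;> first | linarith | skip
  · simp only; field_simp
  · simp only; field_simp

theorem rhoAct_neg (a c d : ℝ) (x) : rhoAct a c d (-x) = - rhoAct a c d x := by
  simp only [rhoAct, Prod.fst_neg, Prod.snd_neg, Prod.neg_mk, Prod.mk.injEq]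
  refine ⟨?_, ?_, ?_⟩ <;> ring

def EvenF (f : Vsp → ℂ) : Prop := ∀ x y : ℝ × ℝ × ℝ, f (-x, y) = f (x, y) ∧ f (x, -y) = f (x, y)

theorem orbital2 (f : Vsp → ℂ) (hf : EvenF f) (s₁ s₂ w : ℂ) (b : Bool)
    (H : IntegrableOn (fun p => Wt s₁ s₂ w p * f (act p (xb b))) Phidomain)
    (x y : ℝ × ℝ × ℝ) (Δ : ℝ) (hΔ : 0 < Δ) (hx : x.1 ≠ 0) (hy : y.1 ≠ 0)
    (dx : x.2.1 ^ 2 - 4 * x.1 * x.2.2 = sg b * Δ) (dy : y.2.1 ^ 2 - 4 * y.1 * y.2.2 = sg b * Δ) :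
    IntegrableOn (fun p => Wt s₁ s₂ w p * f (act p (x, y))) Phidomain ∧
    ∫ p in Phidomain, Wt s₁ s₂ w p * f (act p (x, y)) =
      (((|x.1| : ℝ) : ℂ) ^ (-s₁) * ((|y.1| : ℝ) : ℂ) ^ (-s₂) * ((Δ / 4 : ℝ) : ℂ) ^ (-w)) *
        ∫ p in Phidomain, Wt s₁ s₂ w p * f (act p (xb b)) := by
  have pos : ∀ x y : ℝ × ℝ × ℝ, 0 < x.1 → 0 < y.1 → x.2.1 ^ 2 - 4 * x.1 * x.2.2 = sg b * Δ →
    y.2.1 ^ 2 - 4 * y.1 * y.2.2 = sg b * Δ → 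
    IntegrableOn (fun p => Wt s₁ s₂ w p * f (act p (x, y))) Phidomain ∧
    ∫ p in Phidomain, Wt s₁ s₂ w p * f (act p (x, y)) =
      (((|x.1| : ℝ) : ℂ) ^ (-s₁) * ((|y.1| : ℝ) : ℂ) ^ (-s₂) * ((Δ / 4 : ℝ) : ℂ) ^ (-w)) *
        ∫ p in Phidomain, Wt s₁ s₂ w p * f (act p (xb b)) := by
    intro x y hx hy dx dy
    obtain ⟨h, hh, ha, e1, e2, e3⟩ := orb_exists b x y Δ hΔ hx hy dx dy
    have := orbital f s₁ s₂ w (xb b) h hh H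
    rw [ha, e1, e2] at this
    rw [abs_of_pos hx, abs_of_pos hy, ← e3]
    have e4 : ((h.1 : ℝ) : ℂ) ^ (-(4 * w)) = ((h.1 ^ 4 : ℝ) : ℂ) ^ (-w) := by
      rw [show -(4 * w) = ((4 : ℕ) : ℂ) * (-w) by push_cast; ring, Complex.cpow_nat_mul]
      have h0 := hh.1
      rw [show h.1 ^ 4 = (h.1 * h.1) * (h.1 * h.1) by ring, cpm (by positivity) (by positivity), cpm h0 h0]
      ring
    rw [← e4]
    exact this
  have e1 : ∀ p x y, f (act p (-x, y)) = f (act p (x, y)) := by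
    intro p x y
    simp only [act, rhoAct_neg]
    exact (hf _ _).1
  have e2 : ∀ p x y, f (act p (x, -y)) = f (act p (x, y)) := by
    intro p x y
    simp only [act, rhoAct_neg]
    exact (hf _ _).2
  rcases hx.lt_or_gt with hx | hx <;> rcases hy.lt_or_gt with hy | hy
  · have := pos (-x) (-y) (by simpa using hx) (by simpa using hy) (by simp; linarith) (by simp; linarith)
    simpa only [e1, e2, Prod.fst_neg, abs_neg] using this
  · have := pos (-x) y (by simpa using hx) (by simpa using hy) (by simp; linarith) (by linarith)
    simpa only [e1, e2, Prod.fst_neg, abs_neg] using this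
  · have := pos x (-y) (by simpa using hx) (by simpa using hy) (by linarith) (by simp; linarith)
    simpa only [e1, e2, Prod.fst_neg, abs_neg] using this
  · exact pos x y hx hy dx dy

def rR (r : Ridx) : Vsp := toR ((r.1.1 : ℤ) • rpt r)

theorem orbital3 (f : Vsp → ℂ) (hf : EvenF f) (s₁ s₂ w : ℂ) (r : Ridx) 
    (H : IntegrableOn (fun p => Wt s₁ s₂ w p * f (act p (xb r.1.2.1))) Phidomain) :
    IntegrableOn (fun p => Wt s₁ s₂ w p * ((r.1.1 : ℂ) * f (act p (rR r)))) Phidomain ∧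
    ∫ p in Phidomain, Wt s₁ s₂ w p * ((r.1.1 : ℂ) * f (act p (rR r))) =
      cf s₁ s₂ w r.1.1 r.1.2.2.1 r.1.2.2.2.1 r.1.2.2.2.2 *
        ∫ p in Phidomain, Wt s₁ s₂ w p * f (act p (xb r.1.2.1)) := by
  obtain ⟨⟨k, b, D, m, n⟩, a, c⟩ := r
  simp only at H ⊢
  have hk := ppos k
  have hD := ppos D
  have hm := ppos m
  have hn := ppos n
  set x := (rR ⟨⟨k, b, D, m, n⟩, a, c⟩).1 with hx
  set y := (rR ⟨⟨k, b, D, m, n⟩, a, c⟩).2 with hy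
  have x1 : x.1 = (k : ℝ) * (lead m a.1 : ℝ) := by
    simp [hx, rR, toR, rpt, bform]
  have y1 : y.1 = (k : ℝ) * (lead n c.1 : ℝ) := by
    simp [hy, rR, toR, rpt, bform]
  have l1 : |(lead m a.1 : ℝ)| = m := by exact_mod_cast lead_abs m a.1
  have l2 : |(lead n c.1 : ℝ)| = n := by exact_mod_cast lead_abs n c.1
  have x1' : |x.1| = (k : ℝ) * m := by rw [x1, abs_mul, l1, abs_of_pos hk]
  have y1' : |y.1| = (k : ℝ) * n := by rw [y1, abs_mul, l2, abs_of_pos hk]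
  have dx : x.2.1 ^ 2 - 4 * x.1 * x.2.2 = sg b * ((k : ℝ) ^ 2 * D) := by
    have h := congrArg (fun z : ℤ => (z : ℝ)) (idisc_bform m _ a)
    simp [idisc, cD] at h
    simp [hx, rR, toR, rpt]
    linear_combination (k : ℝ) ^ 2 * h
  have dy : y.2.1 ^ 2 - 4 * y.1 * y.2.2 = sg b * ((k : ℝ) ^ 2 * D) := by
    have h := congrArg (fun z : ℤ => (z : ℝ)) (idisc_bform n _ c)
    simp [idisc, cD] at h
    simp [hy, rR, toR, rpt]
    linear_combination (k : ℝ) ^ 2 * h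
  have := orbital2 f hf s₁ s₂ w b H x y _ (by positivity) (by rw [← abs_pos, x1']; positivity)
    (by rw [← abs_pos, y1']; positivity) dx dy
  rw [x1', y1'] at this
  have e : ∀ p, Wt s₁ s₂ w p * ((k : ℂ) * f (act p (rR ⟨⟨k, b, D, m, n⟩, a, c⟩))) =
    (k : ℂ) * (Wt s₁ s₂ w p * f (act p (x, y))) := by intro p; rw [hx, hy]; ring
  simp only [e]
  refine ⟨this.1.const_mul _, ?_⟩
  rw [integral_const_mul, this.2, cf]
  ring

def phi1 (σ t : ℝ) : ℝ := if t ≤ 1 then t ^ (2 * σ - 3) else t ^ (-3 : ℝ)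

theorem phi1_int (σ : ℝ) (hσ : 1 < σ) : IntegrableOn (phi1 σ) (Set.Ioi 0) := by
  rw [← Set.Ioc_union_Ioi_eq_Ioi zero_le_one, integrableOn_union]
  constructor
  · have : IntegrableOn (fun t : ℝ => t ^ (2 * σ - 3)) (Set.Ioc 0 1) := by
      have := intervalIntegral.intervalIntegrable_rpow' (a := 0) (b := 1) (r := 2 * σ - 3) (by linarith)
      rwa [intervalIntegrable_iff_integrableOn_Ioc_of_le zero_le_one] at this
    refine this.congr_fun ?_ measurableSet_Ioc
    intro t ht
    simp [phi1, ht.2]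
  · have : IntegrableOn (fun t : ℝ => t ^ (-3 : ℝ)) (Set.Ioi 1) :=
      integrableOn_Ioi_rpow_of_lt (by norm_num) (by norm_num)
    refine this.congr_fun ?_ measurableSet_Ioi
    intro t ht
    have : ¬ t ≤ 1 := not_le.2 ht
    simp [phi1, this]

theorem phi1_nonneg (σ t : ℝ) (ht : 0 < t) : 0 ≤ phi1 σ t := by
  unfold phi1; split_ifs <;> positivity

theorem rp_le {a R σ : ℝ} {n : ℕ} (ha : 0 < a) (hR : 1 ≤ R) (haR : a ≤ R) (hs : 0 ≤ σ) (hn : σ ≤ n) :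
    a ^ σ ≤ R ^ n := by
  rw [← Real.rpow_natCast]
  exact (Real.rpow_le_rpow ha.le haR hs).trans (Real.rpow_le_rpow_of_exponent_le hR hn)

theorem E1 (μ t R σ : ℝ) (n : ℕ) (hm : 0 < μ) (ht : 0 < t) (hR : 1 ≤ R) (h1 : μ ^ 2 * t ^ 2 ≤ R) (h2 : μ ^ 2 ≤ 2 * R)
    (hs : 1 < σ) (hn : σ ≤ n) : (μ ^ 2 * t ^ 2) ^ σ * (t ^ 3)⁻¹ ≤ (2 * R) ^ n * phi1 σ t := by
  have e3 : (t ^ 3)⁻¹ = t ^ (-3 : ℝ) := by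
    rw [Real.rpow_neg ht.le]; norm_cast
  unfold phi1
  split_ifs with h
  · have : (μ ^ 2 * t ^ 2) ^ σ * (t ^ 3)⁻¹ = (μ ^ 2) ^ σ * t ^ (2 * σ - 3) := by
      rw [e3, Real.mul_rpow (by positivity) (by positivity), mul_assoc, ← Real.rpow_natCast t 2, ← Real.rpow_mul ht.le,
        ← Real.rpow_add ht]
      congr 2
    rw [this]
    gcongr
    exact rp_le (by positivity) (by linarith) h2 (by linarith) hn
  · rw [e3]
    gcongr
    exact rp_le (by positivity) (by linarith) (by linarith) (by linarith) hn

theorem E3 (μ R ω : ℝ) (n : ℕ) (hm : 0 < μ) (hR : 1 ≤ R) (h2 : μ ^ 2 ≤ 2 * R) (hw : 3 < ω) (hn : 2 * ω ≤ n) :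
    μ ^ (4 * ω) * μ⁻¹ ≤ (2 * R) ^ n * (μ ^ 4 * μ ^ 4) * (3 * R) * (1 + μ ^ 2)⁻¹ := by
  have : μ ^ (4 * ω) * μ⁻¹ = (μ ^ 2) ^ ((4 * ω - 9) / 2) * (μ ^ 4 * μ ^ 4) := by
    rw [← Real.rpow_neg_one, ← Real.rpow_add hm, ← Real.rpow_natCast μ 2, ← Real.rpow_mul hm.le, ← pow_add,
      ← Real.rpow_natCast μ, ← Real.rpow_add hm]
    congr 1
    push_cast
    ring
  rw [this, mul_assoc _ (3 * R)]
  have h3 : 1 ≤ 3 * R * (1 + μ ^ 2)⁻¹ := by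
    rw [← div_eq_mul_inv, one_le_div (by positivity)]
    linarith
  have h4 : (μ ^ 2) ^ ((4 * ω - 9) / 2) ≤ (2 * R) ^ n :=
    rp_le (by positivity) (by linarith) h2 (by linarith) (by linarith)
  calc (μ ^ 2) ^ ((4 * ω - 9) / 2) * (μ ^ 4 * μ ^ 4) ≤ (2 * R) ^ n * (μ ^ 4 * μ ^ 4) := by gcongr
    _ ≤ _ := le_mul_of_one_le_right (by positivity) h3

theorem E4 (μ R u : ℝ) (hR : 1 ≤ R) (h2 : μ ^ 2 ≤ 2 * R) (hu : μ ^ 2 * |u| ≤ R) :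
    μ ^ 4 ≤ 5 * R ^ 2 * (1 + u ^ 2)⁻¹ := by
  rw [← div_eq_mul_inv, le_div_iff₀ (by positivity)]
  have a1 : (μ ^ 2) ^ 2 ≤ (2 * R) ^ 2 := by gcongr
  have a2 : (μ ^ 2 * |u|) ^ 2 ≤ R ^ 2 := by gcongr
  rw [mul_pow, sq_abs] at a2
  nlinarith

theorem norm_bd (p : Param) (hp : Ppos p) (b : Bool) :
    p.1 ^ 2 * p.2.1 ^ 2 ≤ 1 + ‖act p (xb b)‖ ∧ p.1 ^ 2 * p.2.2.1 ^ 2 ≤ 1 + ‖act p (xb b)‖ ∧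
    p.1 ^ 2 * |p.2.2.2.1| ≤ 1 + ‖act p (xb b)‖ ∧ p.1 ^ 2 * |p.2.2.2.2| ≤ 1 + ‖act p (xb b)‖ ∧
    p.1 ^ 2 ≤ 2 * (1 + ‖act p (xb b)‖) := by
  obtain ⟨μ, t, s, u, v⟩ := p
  obtain ⟨hm, ht, hs⟩ := hp
  simp only at hm ht hs ⊢
  set z := act (μ, t, s, u, v) (xb b) with hz
  have n1 : ‖z.1‖ ≤ ‖z‖ := norm_fst_le z
  have n2 : ‖z.2‖ ≤ ‖z‖ := norm_snd_le z
  have m1 : |z.1.1| ≤ ‖z‖ := (norm_fst_le z.1).trans n1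
  have m2 : |z.1.2.1| ≤ ‖z‖ := ((norm_fst_le z.1.2).trans (norm_snd_le z.1)).trans n1
  have m3 : |z.1.2.2| ≤ ‖z‖ := ((norm_snd_le z.1.2).trans (norm_snd_le z.1)).trans n1
  have k1 : |z.2.1| ≤ ‖z‖ := (norm_fst_le z.2).trans n2
  have k2 : |z.2.2.1| ≤ ‖z‖ := ((norm_fst_le z.2.2).trans (norm_snd_le z.2)).trans n2
  have e1 : z.1.1 = μ ^ 2 * t ^ 2 := by simp only [hz, act, rhoAct, xb]; ring
  have e2 : z.1.2.1 = 2 * μ ^ 2 * u := by simp only [hz, act, rhoAct, xb]; field_simp; ring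
  have e4 : z.2.1 = μ ^ 2 * s ^ 2 := by simp only [hz, act, rhoAct, xb]; ring
  have e5 : z.2.2.1 = 2 * μ ^ 2 * v := by simp only [hz, act, rhoAct, xb]; field_simp; ring
  have d : z.1.2.1 ^ 2 - 4 * z.1.1 * z.1.2.2 = 4 * sg b * μ ^ 4 := by
    simp only [hz, act, rhoAct, xb]; field_simp; ring
  have hN : 0 ≤ ‖z‖ := norm_nonneg z
  rw [e4, abs_of_pos (by positivity)] at k1
  rw [e5, abs_mul, abs_of_pos (by positivity)] at k2
  have m1' := m1
  have m2' := m2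
  rw [e1, abs_of_pos (by positivity)] at m1'
  rw [e2, abs_mul, abs_of_pos (by positivity)] at m2'
  have pu : 0 ≤ μ ^ 2 * |u| := by positivity
  have pv : 0 ≤ μ ^ 2 * |v| := by positivity
  refine ⟨by linarith, by linarith, by linarith, by linarith, ?_⟩
  have d1 : 4 * μ ^ 4 ≤ 5 * ‖z‖ ^ 2 := by
    have : |4 * sg b * μ ^ 4| = 4 * μ ^ 4 := by
      rw [abs_mul, abs_mul, abs_of_pos (show 0 < μ ^ 4 by positivity)]
      cases b <;> simp [sg]
    rw [← this, ← d]
    calc |z.1.2.1 ^ 2 - 4 * z.1.1 * z.1.2.2| ≤ |z.1.2.1 ^ 2| + |4 * z.1.1 * z.1.2.2| := abs_sub _ _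
      _ = |z.1.2.1| ^ 2 + 4 * (|z.1.1| * |z.1.2.2|) := by rw [abs_pow, abs_mul, abs_mul]; norm_num; ring
      _ ≤ ‖z‖ ^ 2 + 4 * (‖z‖ * ‖z‖) := by gcongr
      _ = _ := by ring
  have : μ ^ 2 ≤ 2 * ‖z‖ := by
    apply le_of_sq_le_sq _ (by positivity)
    nlinarith
  linarith

theorem Wt_norm (s₁ s₂ w : ℂ) (p : Param) (hp : Ppos p) : ‖Wt s₁ s₂ w p‖ =
    ((p.1 ^ 2 * p.2.1 ^ 2) ^ s₁.re * (p.2.1 ^ 3)⁻¹) * ((p.1 ^ 2 * p.2.2.1 ^ 2) ^ s₂.re * (p.2.2.1 ^ 3)⁻¹) *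
      (p.1 ^ (4 * w.re) * p.1⁻¹) := by
  obtain ⟨h1, h2, h3⟩ := hp
  unfold Wt
  rw [norm_mul, norm_mul, norm_mul, Complex.norm_cpow_eq_rpow_re_of_pos (by positivity),
    Complex.norm_cpow_eq_rpow_re_of_pos (by positivity), Complex.norm_cpow_eq_rpow_re_of_pos (by positivity),
    Complex.norm_real, Real.norm_of_nonneg (by positivity), mul_inv, mul_inv]
  simp
  ring

def domF (σ₁ σ₂ : ℝ) (p : Param) : ℝ :=
  (1 + p.1 ^ 2)⁻¹ * (phi1 σ₁ p.2.1 * (phi1 σ₂ p.2.2.1 * ((1 + p.2.2.2.1 ^ 2)⁻¹ * (1 + p.2.2.2.2 ^ 2)⁻¹)))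

theorem Phi_restrict : (volume : Measure Param).restrict Phidomain =
    (volume.restrict (Set.Ioi 0)).prod ((volume.restrict (Set.Ioi 0)).prod ((volume.restrict (Set.Ioi 0)).prod
      ((volume : Measure ℝ).prod (volume : Measure ℝ)))) := by
  unfold Phidomain
  have : (volume : Measure ℝ).prod (volume : Measure ℝ) = (volume : Measure (ℝ × ℝ)).restrict Set.univ := by
    rw [Measure.restrict_univ]; rfl
  rw [this, Measure.prod_restrict, Measure.prod_restrict, Measure.prod_restrict]
  rfl

theorem domF_int (σ₁ σ₂ : ℝ) (h1 : 1 < σ₁) (h2 : 1 < σ₂) : IntegrableOn (domF σ₁ σ₂) Phidomain := by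
  rw [IntegrableOn, Phi_restrict]
  unfold domF
  have i0 := integrable_inv_one_add_sq
  have i1 : Integrable (fun x : ℝ => (1 + x ^ 2)⁻¹) (volume.restrict (Set.Ioi 0)) := i0.restrict
  exact i1.mul_prod ((phi1_int σ₁ h1).mul_prod ((phi1_int σ₂ h2).mul_prod (i0.mul_prod i0)))

theorem Wt_meas (s₁ s₂ w : ℂ) : Measurable (Wt s₁ s₂ w) := by
  unfold Wt; fun_prop

theorem act_meas (x : Vsp) : Measurable (fun p => act p x) := by
  unfold act rhoAct; fun_prop

theorem base_int (f : SchwartzMap Vsp ℂ) (s₁ s₂ w : ℂ) (h1 : 1 < s₁.re) (h2 : 1 < s₂.re) (h3 : 3 < w.re) (b : Bool) :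
    IntegrableOn (fun p => Wt s₁ s₂ w p * f (act p (xb b))) Phidomain := by
  obtain ⟨n1, hn1⟩ := exists_nat_ge s₁.re
  obtain ⟨n2, hn2⟩ := exists_nat_ge s₂.re
  obtain ⟨n3, hn3⟩ := exists_nat_ge (2 * w.re)
  set N := n1 + n2 + n3 + 5 with hN
  obtain ⟨C, hC⟩ : ∃ C : ℝ, ∀ x, (1 + ‖x‖) ^ N * ‖f x‖ ≤ C := by
    refine ⟨2 ^ N * ((Finset.Iic ((N, 0) : ℕ × ℕ)).sup (fun m => SchwartzMap.seminorm ℝ m.1 m.2)) f, fun x => ?_⟩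
    have := SchwartzMap.one_add_le_sup_seminorm_apply (𝕜 := ℝ) (m := (N, 0)) (k := N) (n := 0) le_rfl le_rfl f x
    rw [norm_iteratedFDeriv_zero] at this
    exact this
  have hC0 : 0 ≤ C := le_trans (by positivity) (hC 0)
  set K := 2 ^ n1 * 2 ^ n2 * 2 ^ n3 * 75 * C with hK
  refine Integrable.mono' ((domF_int s₁.re s₂.re h1 h2).const_mul K) ?_ ?_
  · exact ((Wt_meas s₁ s₂ w).mul (f.continuous.measurable.comp (act_meas _))).aestronglyMeasurable
  · refine (ae_restrict_iff' Phi_meas).2 (ae_of_all _ fun p hp => ?_)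
    rw [mem_Phi] at hp
    obtain ⟨b1, b2, b3, b4, b5⟩ := norm_bd p hp b
    have hC' := hC (act p (xb b))
    set R := 1 + ‖act p (xb b)‖ with hR
    have hR1 : 1 ≤ R := by rw [hR]; linarith [norm_nonneg (act p (xb b))]
    rw [norm_mul, Wt_norm _ _ _ _ hp]
    obtain ⟨p1, p2, p3⟩ := hp
    have q1 := E1 _ _ R _ n1 p1 p2 hR1 b1 b5 h1 hn1
    have q2 := E1 _ _ R _ n2 p1 p3 hR1 b2 b5 h2 hn2
    have q3 := E3 _ R _ n3 p1 hR1 b5 h3 hn3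
    have q4 := E4 _ R _ hR1 b5 b3
    have q5 := E4 _ R _ hR1 b5 b4
    have f1 := phi1_nonneg s₁.re _ p2
    have f2 := phi1_nonneg s₂.re _ p3
    have hR0 : 0 < R := by linarith
    have q3' : p.1 ^ (4 * w.re) * p.1⁻¹ ≤ (2 * R) ^ n3 * ((5 * R ^ 2 * (1 + p.2.2.2.1 ^ 2)⁻¹) *
        (5 * R ^ 2 * (1 + p.2.2.2.2 ^ 2)⁻¹)) * (3 * R) * (1 + p.1 ^ 2)⁻¹ := by
      refine q3.trans ?_
      gcongr
    calc _ ≤ ((2 * R) ^ n1 * phi1 s₁.re p.2.1) * ((2 * R) ^ n2 * phi1 s₂.re p.2.2.1) *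
          ((2 * R) ^ n3 * ((5 * R ^ 2 * (1 + p.2.2.2.1 ^ 2)⁻¹) *
        (5 * R ^ 2 * (1 + p.2.2.2.2 ^ 2)⁻¹)) * (3 * R) * (1 + p.1 ^ 2)⁻¹) * ‖f (act p (xb b))‖ := by gcongr
      _ = (2 ^ n1 * 2 ^ n2 * 2 ^ n3 * 75) * (R ^ N * ‖f (act p (xb b))‖) * domF s₁.re s₂.re p := by
        rw [hN, domF]; simp only [mul_pow, pow_add]; ring
      _ ≤ _ := by
        have : 0 ≤ domF s₁.re s₂.re p := by unfold domF; positivity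
        rw [hK, mul_assoc _ 75]
        gcongr ?_ * _
        rw [mul_assoc _ 75] 
        gcongr

def shf (q : ℤ × ℤ) (p : Param) : Param := p + ((0, 0, 0, (q.1 : ℝ), (q.2 : ℝ)) : Param)

theorem shf_mp (q) : MeasurePreserving (shf q) volume volume := by
  have h := fun c : ℝ => measurePreserving_add_right (volume : Measure ℝ) c
  exact (h 0).prod ((h 0).prod ((h 0).prod ((h q.1).prod (h q.2))))

theorem shf_emb (q) : MeasurableEmbedding (shf q) := (MeasurableEquiv.addRight _).measurableEmbedding

theorem mem_Z (p : Param) : p ∈ Zdomain ↔ Ppos p ∧ p.2.2.2.1 ∈ Set.Ioc (0 : ℝ) 1 ∧ p.2.2.2.2 ∈ Set.Ioc (0 : ℝ) 1 := by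
  simp only [Zdomain, Ppos, Set.mem_prod, Set.mem_Ioi]
  tauto

theorem Z_meas : MeasurableSet Zdomain := by
  unfold Zdomain
  measurability

theorem mem_im (q : ℤ × ℤ) (p : Param) : p ∈ shf q '' Zdomain ↔
    Ppos p ∧ p.2.2.2.1 - q.1 ∈ Set.Ioc (0 : ℝ) 1 ∧ p.2.2.2.2 - q.2 ∈ Set.Ioc (0 : ℝ) 1 := by
  constructor
  · rintro ⟨p, hp, rfl⟩
    rw [mem_Z] at hp
    simpa [shf, Ppos] using hp
  · intro h
    refine ⟨p - ((0, 0, 0, (q.1 : ℝ), (q.2 : ℝ)) : Param), ?_, by simp [shf]⟩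
    rw [mem_Z]
    simpa [Ppos] using h

theorem ioc_iff (u : ℝ) (j : ℤ) : u - j ∈ Set.Ioc (0 : ℝ) 1 ↔ j = ⌈u⌉ - 1 := by
  rw [eq_sub_iff_add_eq, eq_comm, Int.ceil_eq_iff, Set.mem_Ioc]
  push_cast
  constructor <;> rintro ⟨a, b⟩ <;> constructor <;> linarith

theorem iUnion_im : ⋃ q, shf q '' Zdomain = Phidomain := by
  ext p
  rw [Set.mem_iUnion, mem_Phi]
  simp only [mem_im, ioc_iff]
  constructor
  · rintro ⟨q, h, -⟩; exact h
  · intro h; exact ⟨(⌈p.2.2.2.1⌉ - 1, ⌈p.2.2.2.2⌉ - 1), h, rfl, rfl⟩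

theorem disj_im : Pairwise (Function.onFun Disjoint fun q => shf q '' Zdomain) := by
  intro q q' hq
  rw [Function.onFun, Set.disjoint_left]
  intro p hp hp'
  rw [mem_im, ioc_iff, ioc_iff] at hp hp'
  exact hq (Prod.ext (hp.2.1.trans hp'.2.1.symm) (hp.2.2.trans hp'.2.2.symm))

theorem unfold_int (G : Param → ℂ) (H : IntegrableOn G Phidomain) :
    (∀ q, IntegrableOn (fun p => G (shf q p)) Zdomain) ∧
    HasSum (fun q => ∫ p in Zdomain, G (shf q p)) (∫ p in Phidomain, G p) := by
  constructor
  · intro q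
    have h1 : IntegrableOn G (shf q '' Zdomain) := H.mono_set (by
      rw [← iUnion_im]; exact Set.subset_iUnion (fun q => shf q '' Zdomain) q)
    rwa [(shf_mp q).integrableOn_image (shf_emb q)] at h1
  · rw [← iUnion_im] at H ⊢
    have := hasSum_integral_iUnion (fun q => (shf_emb q).measurableSet_image' Z_meas) disj_im H
    have e : (fun q => ∫ x in shf q '' Zdomain, G x) = fun q => ∫ p in Zdomain, G (shf q p) := by
      funext q
      rw [(shf_mp q).setIntegral_image_emb (shf_emb q)]
    rw [e] at this
    exact this

def Fi (f : Vsp → ℂ) (s₁ s₂ w : ℂ) (i : Ridx × (ℤ × ℤ)) (p : Param) : ℂ :=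
  Wt s₁ s₂ w p * ((i.1.1.1 : ℂ) * f (act p (toR ((i.1.1.1 : ℤ) • spt i))))

theorem Wt_shf (s₁ s₂ w q p) : Wt s₁ s₂ w (shf q p) = Wt s₁ s₂ w p := by
  simp [Wt, shf]

theorem act_shf (q : ℤ × ℤ) (p : Param) (r : Ridx) :
    act p (toR ((r.1.1 : ℤ) • spt (r, q))) = act (shf q p) (rR r) := by
  simp only [act, rR, toR, spt, nsh, rhoAct, shf, Prod.mk.injEq, Prod.smul_fst, Prod.smul_snd, Prod.fst_add,
    Prod.snd_add, smul_eq_mul, add_zero]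
  push_cast
  refine ⟨⟨?_, ?_, ?_⟩, ⟨?_, ?_, ?_⟩⟩ <;> first | trivial | ring

theorem Fi_sum (f : Vsp → ℂ) (hf : EvenF f) (s₁ s₂ w : ℂ) (r : Ridx) 
    (H : IntegrableOn (fun p => Wt s₁ s₂ w p * f (act p (xb r.1.2.1))) Phidomain) :
    (∀ q, IntegrableOn (Fi f s₁ s₂ w (r, q)) Zdomain) ∧
    HasSum (fun q => ∫ p in Zdomain, Fi f s₁ s₂ w (r, q) p)
      (cf s₁ s₂ w r.1.1 r.1.2.2.1 r.1.2.2.2.1 r.1.2.2.2.2 *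
        ∫ p in Phidomain, Wt s₁ s₂ w p * f (act p (xb r.1.2.1))) := by
  obtain ⟨h1, h2⟩ := orbital3 f hf s₁ s₂ w r H
  have e : ∀ q, Fi f s₁ s₂ w (r, q) = fun p => (fun p => Wt s₁ s₂ w p * ((r.1.1 : ℂ) * f (act p (rR r)))) (shf q p) := by
    intro q
    funext p
    simp only [Fi]
    rw [Wt_shf, act_shf]
  obtain ⟨h3, h4⟩ := unfold_int _ h1
  rw [h2] at h4
  simp only [e]
  exact ⟨h3, h4⟩

theorem norm_Wt_re (s₁ s₂ w : ℂ) (p : Param) (hp : Ppos p) :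
    Wt (s₁.re : ℂ) (s₂.re : ℂ) (w.re : ℂ) p = (‖Wt s₁ s₂ w p‖ : ℂ) := by
  rw [Wt_norm _ _ _ _ hp]
  obtain ⟨h1, h2, h3⟩ := hp
  unfold Wt
  rw [show (4 * (w.re : ℂ)) = ((4 * w.re : ℝ) : ℂ) by push_cast; ring, ← Complex.ofReal_cpow (by positivity),
    ← Complex.ofReal_cpow (by positivity), ← Complex.ofReal_cpow (by positivity)]
  norm_cast
  rw [mul_inv, mul_inv]
  ring

theorem cf_re (s₁ s₂ w : ℂ) (k D m n : ℕ+) :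
    cf (s₁.re : ℂ) (s₂.re : ℂ) (w.re : ℂ) k D m n = (‖cf s₁ s₂ w k D m n‖ : ℂ) := by
  have := ppos k
  have := ppos D
  have := ppos m
  have := ppos n
  rw [norm_cf, cf, ← Complex.ofReal_neg, ← Complex.ofReal_neg, ← Complex.ofReal_neg, ← Complex.ofReal_cpow (by positivity),
    ← Complex.ofReal_cpow (by positivity), ← Complex.ofReal_cpow (by positivity)]
  push_cast
  rfl

theorem Fi_norm_sum (f : Vsp → ℂ) (hf : EvenF f) (s₁ s₂ w : ℂ) (r : Ridx) 
    (H : IntegrableOn (fun p => Wt s₁ s₂ w p * f (act p (xb r.1.2.1))) Phidomain) :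
    HasSum (fun q => ∫ p in Zdomain, ‖Fi f s₁ s₂ w (r, q) p‖)
      (‖cf s₁ s₂ w r.1.1 r.1.2.2.1 r.1.2.2.2.1 r.1.2.2.2.2‖ *
        ∫ p in Phidomain, ‖Wt s₁ s₂ w p * f (act p (xb r.1.2.1))‖) := by
  have e : ∀ p ∈ Phidomain, ((‖Wt s₁ s₂ w p * f (act p (xb r.1.2.1))‖ : ℝ) : ℂ) =
      Wt (s₁.re : ℂ) (s₂.re : ℂ) (w.re : ℂ) p * (fun x => ((‖f x‖ : ℝ) : ℂ)) (act p (xb r.1.2.1)) := by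
    intro p hp
    rw [norm_mul, Complex.ofReal_mul, norm_Wt_re _ _ _ _ ((mem_Phi p).1 hp)]
  have H' : IntegrableOn (fun p => Wt (s₁.re : ℂ) (s₂.re : ℂ) (w.re : ℂ) p * (fun x => ((‖f x‖ : ℝ) : ℂ)) (act p (xb r.1.2.1))) Phidomain := 
    IntegrableOn.congr_fun (f := fun p => ((‖Wt s₁ s₂ w p * f (act p (xb r.1.2.1))‖ : ℝ) : ℂ)) H.norm.ofReal e Phi_meas
  have hf' : EvenF (fun x => ((‖f x‖ : ℝ) : ℂ)) := by
    intro x y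
    simp only [(hf x y).1, (hf x y).2, and_self]
  have := (Fi_sum _ hf' _ _ _ r H').2
  rw [cf_re, ← setIntegral_congr_fun Phi_meas e, integral_complex_ofReal, ← Complex.ofReal_mul] at this
  rw [← Complex.hasSum_ofReal]
  convert this using 2 with q
  rw [← integral_complex_ofReal]
  refine setIntegral_congr_fun Z_meas fun p hp => ?_
  have hp' := ((mem_Z p).1 hp).1
  simp only [Fi, norm_mul, Complex.ofReal_mul]
  rw [norm_Wt_re _ _ _ _ hp']
  simp

theorem ae_hasSum {ι : Type} [Countable ι] (μ : Measure Param) (F : ι → Param → ℂ)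
    (hF : ∀ i, Integrable (F i) μ) (hs : Summable fun i => ∫ p, ‖F i p‖ ∂μ) :
    ∃ T : Param → ℂ, Integrable T μ ∧ (∀ᵐ p ∂μ, HasSum (fun i => F i p) (T p)) ∧
      HasSum (fun i => ∫ p, F i p ∂μ) (∫ p, T p ∂μ) := by
  let g : ι → Lp ℂ 1 μ := fun i => (hF i).toL1 (F i)
  have hg : ∑' i, ‖g i‖ₑ ≠ ⊤ := by
    rw [tsum_enorm_ne_top_iff_summable_norm]
    refine hs.congr fun i => ?_
    rw [L1.norm_eq_integral_norm]
    refine integral_congr_ae ?_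
    filter_upwards [(hF i).coeFn_toL1] with p hp
    rw [hp]
  have h1 := Lp.hasSum_coeFn_tsum hg
  have h2 : ∀ᵐ p ∂μ, ∀ i, g i p = F i p := by
    rw [ae_all_iff]
    exact fun i => (hF i).coeFn_toL1
  have h3 : ∀ᵐ p ∂μ, HasSum (fun i => F i p) ((∑' i, g i : Lp ℂ 1 μ) p) := by
    filter_upwards [h1, h2] with p hp hp'
    simpa only [hp'] using hp
  refine ⟨_, L1.integrable_coeFn (∑' i, g i), h3, ?_⟩
  have h4 := hasSum_integral_of_summable_integral_norm hF hs
  rwa [integral_congr_ae (g := fun p => (∑' i, g i : Lp ℂ 1 μ) p)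
    (by filter_upwards [h3] with p hp using hp.tsum_eq)] at h4

theorem Wt_ne (s₁ s₂ w : ℂ) (p : Param) (hp : Ppos p) : Wt s₁ s₂ w p ≠ 0 := by
  rw [← norm_pos_iff, Wt_norm _ _ _ _ hp]
  obtain ⟨h1, h2, h3⟩ := hp
  positivity

theorem lattice_eq (f : Vsp → ℂ) (s₁ s₂ w : ℂ) (p : Param) (hp : Ppos p) (T : ℂ)
    (h : HasSum (fun i => Fi f s₁ s₂ w i p) T) : Zintegrand f s₁ s₂ w p = T := by
  let g : ℕ+ × Lset → ℂ := fun c => (c.1 : ℂ) *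
    f (act p (toR ((c.1 : ℤ) • (c.2 : (ℤ × ℤ × ℤ) × (ℤ × ℤ × ℤ)))))
  let e : Ridx × (ℤ × ℤ) ≃ ℕ+ × Lset := Equiv.ofBijective bigMap bigMap_bij
  have hW := Wt_ne s₁ s₂ w p hp
  have h1 : HasSum (fun i => g (e i)) ((Wt s₁ s₂ w p)⁻¹ * T) := by
    have := h.mul_left (Wt s₁ s₂ w p)⁻¹
    simp only [Fi, inv_mul_cancel_left₀ hW] at this
    exact this
  have h2 : HasSum g ((Wt s₁ s₂ w p)⁻¹ * T) := e.hasSum_iff.1 h1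
  have h3 : latticeSum f p = (Wt s₁ s₂ w p)⁻¹ * T := by
    rw [← h2.tsum_eq, h2.summable.tsum_prod]
    rfl
  have h4 : Zintegrand f s₁ s₂ w p = Wt s₁ s₂ w p * latticeSum f p := by
    unfold Zintegrand Wt; ring
  rw [h4, h3, mul_inv_cancel_left₀ hW]

def eC : Bool × (ℕ+ × ℕ+ × ℕ+ × ℕ+) ≃ Cidx where
  toFun x := (x.2.1, x.1, x.2.2)
  invFun c := (c.2.1, c.1, c.2.2)
  left_inv _ := rfl
  right_inv _ := rfl

theorem sum_sol {E : Type} [NormedAddCommGroup E] [NormedSpace ℝ E] (c : Cidx) (x : E) :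
    HasSum (fun _ : Sol c.2.2.2.1 (cD c) × Sol c.2.2.2.2 (cD c) => x)
      (((A (4 * (c.2.2.2.1 : ℕ)) (cD c) : ℝ) * (A (4 * (c.2.2.2.2 : ℕ)) (cD c) : ℝ)) • x) := by
  have := Fintype.ofFinite (Sol c.2.2.2.1 (cD c) × Sol c.2.2.2.2 (cD c))
  have h := hasSum_fintype (fun _ : Sol c.2.2.2.1 (cD c) × Sol c.2.2.2.2 (cD c) => x)
  rw [Finset.sum_const, Finset.card_univ, ← Nat.card_eq_fintype_card, Nat.card_prod] at h
  convert h using 1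
  rw [← Nat.cast_smul_eq_nsmul ℝ]
  push_cast
  rfl

theorem sg_abs (b : Bool) : |sg b| = 1 := by cases b <;> simp [sg]

theorem summ_C (s₁ s₂ w : ℂ) (h1 : 1 < s₁.re) (h2 : 1 < s₂.re) (h3 : 3 < w.re) (Q : Bool → ℝ) (hQ : ∀ b, 0 ≤ Q b) :
    Summable fun c : Cidx => ((A (4 * (c.2.2.2.1 : ℕ)) (cD c) : ℝ) * (A (4 * (c.2.2.2.2 : ℕ)) (cD c) : ℝ)) *
      (‖cf s₁ s₂ w c.1 c.2.2.1 c.2.2.2.1 c.2.2.2.2‖ * Q c.2.1) := by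
  rw [← eC.summable_iff, summable_prod_of_nonneg]
  · refine ⟨fun b => ?_, Summable.of_finite⟩
    refine ((summable_cf s₁ s₂ w h1 h2 h3 (sg b) (sg_abs b)).mul_right (Q b)).congr fun c => ?_
    simp only [eC, cD, Function.comp, Equiv.coe_fn_mk]
    ring
  · intro x
    have := hQ (eC x).2.1
    simp only [Function.comp, Pi.zero_apply]
    positivity

theorem summ_R (s₁ s₂ w : ℂ) (h1 : 1 < s₁.re) (h2 : 1 < s₂.re) (h3 : 3 < w.re) (Q : Bool → ℝ) (hQ : ∀ b, 0 ≤ Q b) :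
    Summable fun r : Ridx => ‖cf s₁ s₂ w r.1.1 r.1.2.2.1 r.1.2.2.2.1 r.1.2.2.2.2‖ * Q r.1.2.1 := by
  rw [summable_sigma_of_nonneg]
  · refine ⟨fun c => (sum_sol c (‖cf s₁ s₂ w c.1 c.2.2.1 c.2.2.2.1 c.2.2.2.2‖ * Q c.2.1)).summable, ?_⟩
    refine (summ_C s₁ s₂ w h1 h2 h3 Q hQ).congr fun c => ?_
    exact (sum_sol c (‖cf s₁ s₂ w c.1 c.2.2.1 c.2.2.2.1 c.2.2.2.2‖ * Q c.2.1)).tsum_eq.symm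
  · intro r
    have := hQ r.1.2.1
    positivity

theorem value_R (s₁ s₂ w : ℂ) (h1 : 1 < s₁.re) (h2 : 1 < s₂.re) (h3 : 3 < w.re) (Q : Bool → ℂ) :
    ∑' r : Ridx, cf s₁ s₂ w r.1.1 r.1.2.2.1 r.1.2.2.2.1 r.1.2.2.2.2 * Q r.1.2.1 =
      (4 : ℂ) ^ w * xiMDS 1 s₁ s₂ w * Q true + (4 : ℂ) ^ w * xiMDS (-1) s₁ s₂ w * Q false := by
  have hR : Summable fun r : Ridx => cf s₁ s₂ w r.1.1 r.1.2.2.1 r.1.2.2.2.1 r.1.2.2.2.2 * Q r.1.2.1 := by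
    refine Summable.of_norm ?_
    simp only [norm_mul]
    exact summ_R s₁ s₂ w h1 h2 h3 (fun b => ‖Q b‖) (fun b => norm_nonneg _)
  rw [hR.tsum_sigma]
  simp only [(sum_sol _ _).tsum_eq]
  have hC : Summable fun c : Cidx => ((A (4 * (c.2.2.2.1 : ℕ)) (cD c) : ℝ) * (A (4 * (c.2.2.2.2 : ℕ)) (cD c) : ℝ)) •
      (cf s₁ s₂ w c.1 c.2.2.1 c.2.2.2.1 c.2.2.2.2 * Q c.2.1) := by
    refine Summable.of_norm ?_
    refine (summ_C s₁ s₂ w h1 h2 h3 (fun b => ‖Q b‖) (fun b => norm_nonneg _)).congr fun c => ?_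
    rw [norm_smul, Real.norm_of_nonneg (by positivity), norm_mul]
  have hC' := eC.summable_iff.2 hC
  simp only [Function.comp_def] at hC'
  rw [← eC.tsum_eq, hC'.tsum_prod, tsum_bool, add_comm]
  have key : ∀ b, ∑' c : ℕ+ × ℕ+ × ℕ+ × ℕ+, ((A (4 * ((eC (b, c)).2.2.2.1 : ℕ)) (cD (eC (b, c))) : ℝ) *
      (A (4 * ((eC (b, c)).2.2.2.2 : ℕ)) (cD (eC (b, c))) : ℝ)) •
      (cf s₁ s₂ w (eC (b, c)).1 (eC (b, c)).2.2.1 (eC (b, c)).2.2.2.1 (eC (b, c)).2.2.2.2 * Q (eC (b, c)).2.1) =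
      (4 : ℂ) ^ w * xiMDS (sg b) s₁ s₂ w * Q b := by
    intro b
    rw [← regroup s₁ s₂ w (sg b), ← tsum_mul_right]
    · refine tsum_congr fun c => ?_
      simp only [eC, cD, Equiv.coe_fn_mk, Complex.real_smul]
      push_cast
      ring
    · refine Summable.of_norm ?_
      refine (summable_cf s₁ s₂ w h1 h2 h3 (sg b) (sg_abs b)).congr fun c => ?_
      simp
  have k1 := key true
  have k2 := key false
  simp only [sg] at k1 k2
  exact congrArg₂ (· + ·) k1 k2

theorem Phi_eq (f : Vsp → ℂ) (s₁ s₂ w : ℂ) (x : Vsp) :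
    ∫ p in Phidomain, Wt s₁ s₂ w p * f (act p x) = PhiInt f s₁ s₂ w x := by
  unfold PhiInt Wt
  congr 1
  funext p
  ring

theorem main_thm (f : SchwartzMap Vsp ℂ)
    (hf : ∀ x y : ℝ × ℝ × ℝ, f (-x, y) = f (x, y) ∧ f (x, -y) = f (x, y))
    (s₁ s₂ w : ℂ) (h1 : 1 < s₁.re) (h2 : 1 < s₂.re) (h3 : 3 < w.re) :
    IntegrableOn (Zintegrand (⇑f) s₁ s₂ w) Zdomain volume ∧
    Zfun (⇑f) s₁ s₂ w
      = (4 : ℂ) ^ w * xiMDS 1 s₁ s₂ w * PhiInt (⇑f) s₁ s₂ w xplus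
        + (4 : ℂ) ^ w * xiMDS (-1) s₁ s₂ w * PhiInt (⇑f) s₁ s₂ w xminus := by
  have H := fun b => base_int f s₁ s₂ w h1 h2 h3 b
  have hs : Summable fun i : Ridx × (ℤ × ℤ) => ∫ p in Zdomain, ‖Fi f s₁ s₂ w i p‖ := by
    rw [summable_prod_of_nonneg (fun i => integral_nonneg fun p => norm_nonneg _)]
    refine ⟨fun r => (Fi_norm_sum f hf s₁ s₂ w r (H _)).summable, ?_⟩
    refine (summ_R s₁ s₂ w h1 h2 h3 (fun b => ∫ p in Phidomain, ‖Wt s₁ s₂ w p * f (act p (xb b))‖)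
      (fun b => integral_nonneg fun p => norm_nonneg _)).congr fun r => ?_
    exact (Fi_norm_sum f hf s₁ s₂ w r (H _)).tsum_eq.symm
  obtain ⟨T, hT, hT1, hT2⟩ := ae_hasSum (volume.restrict Zdomain) (Fi f s₁ s₂ w)
    (fun i => (Fi_sum f hf s₁ s₂ w i.1 (H _)).1 i.2) hs
  have hZ : Zintegrand (⇑f) s₁ s₂ w =ᵐ[volume.restrict Zdomain] T := by
    filter_upwards [hT1, ae_restrict_mem Z_meas] with p hp hpZ
    exact lattice_eq f s₁ s₂ w p ((mem_Z p).1 hpZ).1 _ hp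
  refine ⟨hT.congr hZ.symm, ?_⟩
  rw [Zfun, integral_congr_ae hZ, ← hT2.tsum_eq, hT2.summable.tsum_prod]
  have e : ∀ r : Ridx, ∑' q, ∫ p in Zdomain, Fi f s₁ s₂ w (r, q) p =
      cf s₁ s₂ w r.1.1 r.1.2.2.1 r.1.2.2.2.1 r.1.2.2.2.2 * PhiInt f s₁ s₂ w (xb r.1.2.1) := by
    intro r
    rw [(Fi_sum f hf s₁ s₂ w r (H _)).2.tsum_eq, Phi_eq]
  simp only [e]
  rw [value_R s₁ s₂ w h1 h2 h3 (fun b => PhiInt f s₁ s₂ w (xb b))]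
  have x1 : xb true = xplus := by simp [xb, xplus, sg]
  have x2 : xb false = xminus := by simp [xb, xminus, sg]
  rw [x1, x2]

theorem stmt13 (f : SchwartzMap Vsp ℂ)
    (hf : ∀ x y : ℝ × ℝ × ℝ, f (-x, y) = f (x, y) ∧ f (x, -y) = f (x, y))
    (s₁ s₂ w : ℂ) (h1 : 1 < s₁.re) (h2 : 1 < s₂.re) (h3 : 3 < w.re) :
    IntegrableOn (Zintegrand (⇑f) s₁ s₂ w) Zdomain volume ∧
    Zfun (⇑f) s₁ s₂ w
      = (4 : ℂ) ^ w * xiMDS 1 s₁ s₂ w * PhiInt (⇑f) s₁ s₂ w xplus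
        + (4 : ℂ) ^ w * xiMDS (-1) s₁ s₂ w * PhiInt (⇑f) s₁ s₂ w xminus := by
  exact main_thm f hf s₁ s₂ w h1 h2 h3
end
end

section
/- Let f : ℝ⁶ → ℂ be a Schwartz function satisfying f(−x, y) = f(x, −y) = f(x, y), and let s₁, s₂ ∈ ℂ with Re(s₁) > 1 and Re(s₂) > 1. For any w ∈ ℂ, assuming both sides converge absolutely, ∫_{(0,1]}∫₀^∞∫₀^∞∫₀¹∫₀¹ (μ²t²)^{s₁} (μ²s²)^{s₂} μ^{4w} ∑_{k=1}^{∞} ∑_{v ∈ kL'} k · f(μ⁻⁴·(h·v)) du dv (dt/t³)(ds/s³)(dμ/μ) = Z₊(f, s₁, s₂, −s₁−s₂−w), where Z₊(f,s₁,s₂,w) := ∫_{[1,∞)}∫₀^∞∫₀^∞∫₀¹∫₀¹ (μ²t²)^{s₁} (μ²s²)^{s₂} μ^{4w} ∑_{k=1}^{∞} ∑_{v ∈ kL'} k · f(h·v) du dv (dt/t³)(ds/s³)(dμ/μ) and μ⁻⁴·(h·v) denotes scalar multiplication by μ⁻⁴ on ℝ⁶. -/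
open MeasureTheory

noncomputable section

/-- Integration domain of `Z₊`: `μ ∈ [1,∞)`, `t, s ∈ (0,∞)`, `u, v ∈ (0,1]`. -/
def ZplusDomain : Set Param :=
  Set.Ici 1 ×ˢ Set.Ioi 0 ×ˢ Set.Ioi 0 ×ˢ Set.Ioc 0 1 ×ˢ Set.Ioc 0 1

/-- Integration domain with `μ ∈ (0,1]`. -/
def ZminusDomain : Set Param :=
  Set.Ioc 0 1 ×ˢ Set.Ioi 0 ×ˢ Set.Ioi 0 ×ˢ Set.Ioc 0 1 ×ˢ Set.Ioc 0 1

/-- The lattice sum `∑_{k≥1} ∑_{v ∈ kL'} k · f(μ⁻⁴·(h·v))`, where `μ⁻⁴·` is scalar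
multiplication on `ℝ⁶`. -/
def latticeSumScaled (f : Vsp → ℂ) (h : Param) : ℂ :=
  ∑' (k : ℕ+) (x : Lset), (k : ℂ) *
    f ((h.1 ^ 4)⁻¹ • act h (toR ((k : ℤ) • (x : (ℤ × ℤ × ℤ) × (ℤ × ℤ × ℤ)))))

/-- Integrand of the left-hand side of Lemma "changing variable from h to h⁻¹". -/
def Lintegrand (f : Vsp → ℂ) (s₁ s₂ w : ℂ) (p : Param) : ℂ :=
  ((p.1 ^ 2 * p.2.1 ^ 2 : ℝ) : ℂ) ^ s₁ * ((p.1 ^ 2 * p.2.2.1 ^ 2 : ℝ) : ℂ) ^ s₂ *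
    ((p.1 : ℝ) : ℂ) ^ (4 * w) * latticeSumScaled f p *
    (((p.2.1 ^ 3 * p.2.2.1 ^ 3 * p.1)⁻¹ : ℝ) : ℂ)

theorem act_inv_scaled (m : ℝ) (hm : 0 < m) (y : ℝ × ℝ × ℝ × ℝ) (q : Vsp) :
    (m ^ 4)⁻¹ • act (m, y) q = act (m⁻¹, y) q := by
  have hm' := hm.ne'
  simp only [act, rhoAct, Prod.smul_mk, smul_eq_mul, Prod.mk.injEq, div_eq_mul_inv]
  refine ⟨⟨?_, ?_, ?_⟩, ?_, ?_, ?_⟩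
  all_goals
    generalize (y.1)⁻¹ = a
    generalize (y.2.1)⁻¹ = b
    field_simp

theorem latticeSum_inv (f : Vsp → ℂ) (m : ℝ) (hm : 0 < m) (y : ℝ × ℝ × ℝ × ℝ) :
    latticeSumScaled f (m, y) = latticeSum f (m⁻¹, y) := by
  simp only [latticeSumScaled, latticeSum, act_inv_scaled m hm]

theorem cpow_factor (m t : ℝ) (hm : 0 < m) (ht : 0 < t) (s : ℂ) :
    ((m ^ 2 * t ^ 2 : ℝ) : ℂ) ^ s = (m : ℂ) ^ (2 * s) * ((t ^ 2 : ℝ) : ℂ) ^ s := by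
  rw [Complex.ofReal_mul, Complex.mul_cpow_ofReal_nonneg (by positivity) (by positivity)]
  congr 1
  have hmc : (m : ℂ) ≠ 0 := by exact_mod_cast hm.ne'
  rw [Complex.cpow_def_of_ne_zero (by exact_mod_cast (pow_pos hm 2).ne'),
    Complex.cpow_def_of_ne_zero hmc, ← Complex.ofReal_log (by positivity),
    ← Complex.ofReal_log hm.le, Real.log_pow]
  congr 1
  push_cast
  ring

theorem cpow_inv_pos (m : ℝ) (hm : 0 < m) (s : ℂ) :
    ((m⁻¹ : ℝ) : ℂ) ^ s = (m : ℂ) ^ (-s) := by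
  have hmc : (m : ℂ) ≠ 0 := by exact_mod_cast hm.ne'
  rw [Complex.cpow_def_of_ne_zero (by exact_mod_cast (inv_pos.2 hm).ne'),
    Complex.cpow_def_of_ne_zero hmc, ← Complex.ofReal_log (by positivity),
    ← Complex.ofReal_log hm.le, Real.log_inv]
  congr 1
  push_cast
  ring

theorem Lintegrand_eq (f : Vsp → ℂ) (s₁ s₂ w : ℂ) (m : ℝ) (hm : 0 < m)
    (y : ℝ × ℝ × ℝ × ℝ) (h1 : 0 < y.1) (h2 : 0 < y.2.1) :
    Lintegrand f s₁ s₂ w (m, y)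
      = |-(m ^ 2)⁻¹| • Zintegrand f s₁ s₂ (-s₁ - s₂ - w) (m⁻¹, y) := by
  have hmc : (m : ℂ) ≠ 0 := by exact_mod_cast hm.ne'
  have hi : 0 < m⁻¹ := inv_pos.2 hm
  have hw : ((m ^ 2)⁻¹ : ℝ) * (y.1 ^ 3 * y.2.1 ^ 3 * m⁻¹)⁻¹ = (y.1 ^ 3 * y.2.1 ^ 3 * m)⁻¹ := by
    field_simp
  have hp : (m : ℂ) ^ (2 * s₁) * (m : ℂ) ^ (2 * s₂) * (m : ℂ) ^ (4 * w)
      = (m : ℂ) ^ (-(2 * s₁)) * (m : ℂ) ^ (-(2 * s₂)) *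
        (m : ℂ) ^ (-(4 * (-s₁ - s₂ - w))) := by
    rw [← Complex.cpow_add _ _ hmc, ← Complex.cpow_add _ _ hmc, ← Complex.cpow_add _ _ hmc,
      ← Complex.cpow_add _ _ hmc]
    congr 1
    ring
  rw [abs_neg, abs_of_pos (by positivity), Complex.real_smul]
  simp only [Lintegrand, Zintegrand]
  rw [latticeSum_inv f m hm, cpow_factor m _ hm h1, cpow_factor m _ hm h2,
    cpow_factor m⁻¹ _ hi h1, cpow_factor m⁻¹ _ hi h2, cpow_inv_pos m hm, cpow_inv_pos m hm,
    cpow_inv_pos m hm, ← hw, Complex.ofReal_mul]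
  linear_combination ((y.1 ^ 2 : ℝ) : ℂ) ^ s₁ * ((y.2.1 ^ 2 : ℝ) : ℂ) ^ s₂ *
    latticeSum f (m⁻¹, y) * (((m ^ 2)⁻¹ : ℝ) : ℂ) *
    (((y.1 ^ 3 * y.2.1 ^ 3 * m⁻¹)⁻¹ : ℝ) : ℂ) * hp

theorem image_inv_Ioc : (fun x : ℝ => x⁻¹) '' Set.Ioc 0 1 = Set.Ici 1 := by
  ext x
  constructor
  · rintro ⟨y, ⟨h0, h1⟩, rfl⟩
    exact (one_le_inv₀ h0).2 h1
  · intro hx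
    have hx' : (1 : ℝ) ≤ x := hx
    exact ⟨x⁻¹, ⟨by positivity, inv_le_one_of_one_le₀ hx'⟩, inv_inv x⟩

theorem stmt14 (f : SchwartzMap Vsp ℂ)
    (hf : ∀ x y : ℝ × ℝ × ℝ, f (-x, y) = f (x, y) ∧ f (x, -y) = f (x, y))
    (s₁ s₂ w : ℂ) (h1 : 1 < s₁.re) (h2 : 1 < s₂.re)
    (hL : IntegrableOn (Lintegrand (⇑f) s₁ s₂ w) ZminusDomain volume)
    (hR : IntegrableOn (Zintegrand (⇑f) s₁ s₂ (-s₁ - s₂ - w)) ZplusDomain volume) :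
    (∫ p in ZminusDomain, Lintegrand (⇑f) s₁ s₂ w p)
      = ∫ p in ZplusDomain, Zintegrand (⇑f) s₁ s₂ (-s₁ - s₂ - w) p := by
  have hT : MeasurableSet
      (Set.Ioi (0 : ℝ) ×ˢ Set.Ioi (0 : ℝ) ×ˢ Set.Ioc (0 : ℝ) 1 ×ˢ Set.Ioc (0 : ℝ) 1) := by
    measurability
  unfold ZminusDomain at hL ⊢
  unfold ZplusDomain at hR ⊢
  rw [Measure.volume_eq_prod] at hL hR ⊢
  rw [setIntegral_prod _ hL, setIntegral_prod _ hR, ← image_inv_Ioc,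
    integral_image_eq_integral_abs_deriv_smul (f' := fun x => -(x ^ 2)⁻¹) measurableSet_Ioc
      (fun x hx => (hasDerivAt_inv hx.1.ne').hasDerivWithinAt) inv_injective.injOn]
  refine setIntegral_congr_fun measurableSet_Ioc fun m hm => ?_
  rw [← integral_smul]
  refine setIntegral_congr_fun hT fun y hy => ?_
  exact Lintegrand_eq _ _ _ _ m hm.1 y hy.1 hy.2.1
end
end

section
/- Let f : ℝ⁶ → ℂ be a Schwartz function satisfying f(−x, y) = f(x, −y) = f(x, y), and let s₁, s₂, w ∈ ℂ with Re(s₁) > 1 and Re(s₂) > 1 (w arbitrary). Then the integral Z₊(f,s₁,s₂,w) := ∫_{[1,∞)}∫₀^∞∫₀^∞∫₀¹∫₀¹ (μ²t²)^{s₁} (μ²s²)^{s₂} μ^{4w} ∑_{k=1}^{∞} ∑_{v ∈ kL'} k · f(h·v) du dv (dt/t³)(ds/s³)(dμ/μ), in which the domain of the μ-integration is restricted to μ ≥ 1, converges absolutely for every w ∈ ℂ. -/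
open MeasureTheory

noncomputable section

theorem div_aux (M : ℕ) (hM : 0 < M) (D x0 x y : ℤ)
    (h0 : (M:ℤ) ∣ x0^2 - D) (hx : (M:ℤ) ∣ x^2 - D) (hy : (M:ℤ) ∣ y^2 - D)
    (hg : Int.gcd (x - x0) M = Int.gcd (y - x0) M) : (M:ℤ) ∣ 4 * D * (x - y) := by
  obtain ⟨e, he⟩ : Int.gcd (x - x0) M ∣ M := by
    have := Int.gcd_dvd_right (a := x - x0) (b := (M:ℤ))
    exact_mod_cast this
  have key : ∀ z : ℤ, (M:ℤ) ∣ z^2 - D → Int.gcd (z - x0) M = Int.gcd (x - x0) M →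
      ((Int.gcd (x - x0) M : ℕ) : ℤ) ∣ z - x0 ∧ (e : ℤ) ∣ z + x0 := by
    intro z hz hzg
    rw [← hzg] at he ⊢
    refine ⟨Int.gcd_dvd_left .., ?_⟩
    set d := Int.gcd (z - x0) M with hd
    have hdpos : 0 < d := by
      rcases Nat.eq_zero_or_pos d with h | h
      · rw [h] at he; omega
      · exact h
    obtain ⟨w, hw⟩ : (d:ℤ) ∣ z - x0 := Int.gcd_dvd_left ..
    have hco : IsCoprime (e:ℤ) w := by
      rw [Int.isCoprime_iff_gcd_eq_one]
      have h1 : d = d * Int.gcd w e := by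
        conv_lhs => rw [hd, hw, he]
        push_cast
        rw [Int.gcd_mul_left]; simp
      have : Int.gcd w e = 1 := by
        have := Nat.eq_of_mul_eq_mul_left hdpos (h1.symm.trans (mul_one d).symm)
        exact this
      rw [Int.gcd_comm]; exact this
    have h2 : (M:ℤ) ∣ (z - x0) * (z + x0) := by
      have := dvd_sub hz h0
      have e1 : (z - x0) * (z + x0) = z^2 - D - (x0^2 - D) := by ring
      rw [e1]; exact this
    have h3 : (e:ℤ) ∣ w * (z + x0) := by
      have : (d:ℤ) * e ∣ d * (w * (z + x0)) := by
        have h4 : ((d * e : ℕ) : ℤ) ∣ (z - x0) * (z + x0) := he ▸ h2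
        rw [hw] at h4; push_cast at h4; rwa [mul_assoc] at h4
      exact (mul_dvd_mul_iff_left (by exact_mod_cast hdpos.ne')).1 this
    exact hco.dvd_of_dvd_mul_left h3
  obtain ⟨a1, a2⟩ := key x hx rfl
  obtain ⟨b1, b2⟩ := key y hy hg.symm
  set d := Int.gcd (x - x0) M
  have c1 : (d:ℤ) ∣ x - y := by
    have := dvd_sub a1 b1; simpa using this
  have c2 : (e:ℤ) ∣ x - y := by
    have := dvd_sub a2 b2; simpa using this
  have hl : ((Nat.lcm d e : ℕ) : ℤ) ∣ x - y := by
    have := Int.coe_lcm_dvd c1 c2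
    simpa [Int.lcm] using this
  set g := Nat.gcd d e with hgd
  have g1 : (g:ℤ) ∣ d := by exact_mod_cast Nat.gcd_dvd_left d e
  have g2 : (g:ℤ) ∣ e := by exact_mod_cast Nat.gcd_dvd_right d e
  have g3 : (g:ℤ) ∣ 2 * x0 := by
    have := dvd_sub (g2.trans a2) (g1.trans a1)
    have e1 : 2 * x0 = x + x0 - (x - x0) := by ring
    rw [e1]; exact this
  have g4 : (g:ℤ) ∣ 4 * D := by
    have h5 : (g:ℤ) ∣ x0^2 - D := by
      refine dvd_trans ?_ h0
      rw [he]; push_cast; exact g1.mul_right _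
    have h6 := dvd_sub (g3.mul_right (2 * x0)) (h5.mul_left 4)
    have e1 : 4 * D = 2 * x0 * (2 * x0) - 4 * (x0^2 - D) := by ring
    rw [e1]; exact h6
  have : (M:ℤ) = g * (Nat.lcm d e : ℕ) := by
    rw [he]; rw [← Nat.gcd_mul_lcm d e]; push_cast; rfl
  rw [this]
  exact mul_dvd_mul g4 hl

theorem count_aux (M : ℕ) (hM : 0 < M) (D : ℤ) (hD : D ≠ 0) (F : Finset ℤ)
    (hF : ∀ x ∈ F, (M:ℤ) ∣ x^2 - D) (hFd : ∀ x ∈ F, ∀ y ∈ F, |x - y| ≤ M) :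
    F.card ≤ 9 * D.natAbs * M.divisors.card := by
  classical
  rcases F.eq_empty_or_nonempty with rfl | ⟨x0, hx0⟩
  · simp
  refine (Finset.card_le_mul_card_image_of_maps_to (f := fun x => Int.gcd (x - x0) M)
    (t := M.divisors) ?_ (9 * D.natAbs) ?_)
  · intro x hx
    rw [Nat.mem_divisors]
    refine ⟨?_, hM.ne'⟩
    have := Int.gcd_dvd_right (a := x - x0) (b := (M:ℤ))
    exact_mod_cast this
  · intro d hd
    rcases (F.filter fun x => Int.gcd (x - x0) M = d).eq_empty_or_nonempty with h | ⟨y, hy⟩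
    · rw [h]; simp
    · have hMz : (0:ℤ) < M := by exact_mod_cast hM
      rw [Finset.mem_filter] at hy
      have hdv : ∀ x ∈ F.filter (fun x => Int.gcd (x - x0) M = d), (M:ℤ) ∣ 4 * D * (x - y) := by
        intro x hx
        rw [Finset.mem_filter] at hx
        exact div_aux M hM D x0 x y (hF _ hx0) (hF _ hx.1) (hF _ hy.1) (hx.2.trans hy.2.symm)
      have : (F.filter fun x => Int.gcd (x - x0) M = d).card ≤
          (Finset.Icc (-(4 * |D|)) (4 * |D|)).card := by
        refine Finset.card_le_card_of_injOn (fun x => 4 * D * (x - y) / M) ?_ ?_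
        · intro x hx
          obtain ⟨q, hq⟩ := hdv x hx
          have hx' := (Finset.mem_filter.1 hx).1
          have hb := hFd x hx' y hy.1
          simp only [Finset.coe_Icc, Set.mem_Icc]
          rw [hq, Int.mul_ediv_cancel_left _ hMz.ne', ← abs_le]
          have h1 : (M:ℤ) * |q| ≤ M * (4 * |D|) := by
            have : |(M:ℤ) * q| = 4 * |D| * |x - y| := by
              rw [← hq, abs_mul, abs_mul]; norm_num
            rw [abs_mul, abs_of_pos hMz] at this
            rw [this, mul_comm]
            gcongr
          exact le_of_mul_le_mul_left h1 hMz
        · intro x hx x' hx' h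
          have h := h
          simp only at h
          obtain ⟨q, hq⟩ := hdv x hx
          obtain ⟨q', hq'⟩ := hdv x' hx'
          rw [hq, hq', Int.mul_ediv_cancel_left _ hMz.ne', Int.mul_ediv_cancel_left _ hMz.ne'] at h
          rw [h, ← hq'] at hq
          have := mul_left_cancel₀ (by positivity) hq
          linarith
      refine this.trans ?_
      rw [Int.card_Icc]
      have : 0 < D.natAbs := Int.natAbs_pos.2 hD
      rw [Int.abs_eq_natAbs]
      omega

theorem lint_affine (F : ℝ → ENNReal) (hF : Measurable F) (c b : ℝ) (hc : c ≠ 0) :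
    ∫⁻ u, F (c * u + b) = ENNReal.ofReal |c⁻¹| * ∫⁻ z, F z := by
  have h1 : ∫⁻ u, F (c * u + b) = ∫⁻ z, F (z + b) ∂(Measure.map (c * ·) volume) := by
    rw [lintegral_map (by fun_prop) (by fun_prop)]
  rw [h1, Real.map_volume_mul_left hc, lintegral_smul_measure, lintegral_add_right_eq_self F b]
  rfl

/-- The `u`-integral. -/
noncomputable def Uint (m x : ℤ) : ENNReal :=
  ∫⁻ u in Set.Ioc (0:ℝ) 1, ENNReal.ofReal ((1 + (2 * u * m + x) ^ 2)⁻¹)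

theorem sumU (m D : ℤ) (hm : m ≠ 0) (hD : D ≠ 0) :
    ∑' x : ℤ, (if 4 * m ∣ x ^ 2 - D then Uint m x else 0) ≤
      ENNReal.ofReal (9 * Real.pi) * (D.natAbs : ENNReal) *
        (((4 * m.natAbs).divisors.card : ENNReal) * ENNReal.ofReal ((m.natAbs : ℝ)⁻¹)) := by
  classical
  have hmR : (m:ℝ) ≠ 0 := by exact_mod_cast hm
  have h2m : (2 * m : ℝ) ≠ 0 := by positivity
  set G : ℤ → ℝ → ENNReal := fun x z =>
    (if 4 * m ∣ x ^ 2 - D ∧ (z - x) / (2 * m) ∈ Set.Ioc (0:ℝ) 1 then 1 else 0) *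
      ENNReal.ofReal ((1 + z ^ 2)⁻¹) with hG
  have hGm : ∀ x, Measurable (G x) := by
    intro x
    refine Measurable.mul ?_ (by fun_prop)
    refine Measurable.ite ?_ measurable_const measurable_const
    by_cases h : 4 * m ∣ x ^ 2 - D
    · simp only [h, true_and]
      exact (by fun_prop : Measurable fun z : ℝ => (z - x) / (2 * m)) measurableSet_Ioc
    · simp [h]
  have h1 : ∀ x : ℤ, (if 4 * m ∣ x ^ 2 - D then Uint m x else 0) =
      ENNReal.ofReal |(2 * m : ℝ)⁻¹| * ∫⁻ z, G x z := by
    intro x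
    rw [← lint_affine (G x) (hGm x) (2 * m) x h2m]
    split_ifs with h
    · rw [Uint, ← lintegral_indicator measurableSet_Ioc]
      congr 1
      ext u
      simp only [hG, Set.indicator, h, true_and]
      have : (2 * (m:ℝ) * u + x - x) / (2 * m) = u := by field_simp; ring
      rw [this]
      split_ifs
      · rw [one_mul]; congr 4; ring
      · simp
    · simp [hG, h]
  simp_rw [h1]
  rw [ENNReal.tsum_mul_left, ← lintegral_tsum (fun x => (hGm x).aemeasurable)]
  have h2 : ∀ z, ∑' x, G x z ≤ ((9 * D.natAbs * (4 * m.natAbs).divisors.card : ℕ) : ENNReal) *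
      ENNReal.ofReal ((1 + z ^ 2)⁻¹) := by
    intro z
    simp only [hG]
    rw [ENNReal.tsum_mul_right]
    gcongr
    rw [ENNReal.tsum_eq_iSup_sum]
    refine iSup_le fun F => ?_
    rw [Finset.sum_boole]
    norm_cast
    refine count_aux (4 * m.natAbs) (by positivity) D hD _ ?_ ?_
    · intro x hx
      have := (Finset.mem_filter.1 hx).2.1
      rw [← Int.natAbs_dvd] at this
      simpa [Int.natAbs_mul] using this
    · intro x hx y hy
      have hx' := (Finset.mem_filter.1 hx).2.2
      have hy' := (Finset.mem_filter.1 hy).2.2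
      have e : ((x - y : ℤ) : ℝ) = ((z - y) / (2 * m) - (z - x) / (2 * m)) * (2 * m) := by
        push_cast; field_simp; ring
      have : |((x - y : ℤ) : ℝ)| ≤ 1 * (2 * |(m:ℝ)|) := by
        rw [e, abs_mul, abs_mul (2:ℝ), abs_two]
        gcongr
        rw [abs_le]
        push_cast at hx' hy'
        constructor <;> linarith [hx'.1, hx'.2, hy'.1, hy'.2]
      have h3 : |x - y| ≤ 2 * |m| := by
        rw [one_mul] at this; exact_mod_cast this
      push_cast
      have := abs_nonneg m
      linarith
  have hpi : ∫⁻ z : ℝ, ENNReal.ofReal ((1 + z ^ 2)⁻¹) = ENNReal.ofReal Real.pi := by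
    rw [← ofReal_integral_eq_lintegral_ofReal integrable_inv_one_add_sq
      (Filter.Eventually.of_forall fun z => by positivity), integral_univ_inv_one_add_sq]
  calc _ ≤ ENNReal.ofReal |(2 * m : ℝ)⁻¹| * ∫⁻ z : ℝ, ((9 * D.natAbs * (4 * m.natAbs).divisors.card : ℕ) : ENNReal) *
      ENNReal.ofReal ((1 + z ^ 2)⁻¹) := by gcongr; exact h2 _
    _ = ENNReal.ofReal |(2 * m : ℝ)⁻¹| * (((9 * D.natAbs * (4 * m.natAbs).divisors.card : ℕ) : ENNReal) * ENNReal.ofReal Real.pi) := by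
      rw [lintegral_const_mul _ (by fun_prop), hpi]
    _ ≤ ENNReal.ofReal ((m.natAbs : ℝ)⁻¹) * (((9 * D.natAbs * (4 * m.natAbs).divisors.card : ℕ) : ENNReal) * ENNReal.ofReal Real.pi) := by
      gcongr
      rw [abs_inv, abs_mul, abs_two, Nat.cast_natAbs, Int.cast_abs]
      have : 0 < |(m:ℝ)| := abs_pos.2 hmR
      gcongr
      linarith
    _ = _ := by
      rw [ENNReal.ofReal_mul (by norm_num)]
      push_cast
      rw [show ENNReal.ofReal 9 = 9 by simp]
      ring

noncomputable def Tf (σ : ℝ) (a : ℕ) (m : ℝ) (t : ℝ) : ℝ :=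
  t ^ (2 * σ - 3) * ((1 + t ^ 2 * m) ^ a)⁻¹

theorem Tf_meas (σ : ℝ) (a : ℕ) (m : ℝ) : Measurable (Tf σ a m) := by
  unfold Tf; fun_prop

theorem tint_one (σ : ℝ) (a : ℕ) (hσ : 1 < σ) (ha : σ ≤ a) :
    ∫⁻ t in Set.Ioi (0:ℝ), ENNReal.ofReal (Tf σ a 1 t) < ⊤ := by
  rw [← Set.Ioc_union_Ioi_eq_Ioi (zero_le_one : (0:ℝ) ≤ 1)]
  refine (lintegral_union_le _ _ _).trans_lt (ENNReal.add_lt_top.2 ⟨?_, ?_⟩)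
  · have hi : IntegrableOn (fun t : ℝ => t ^ (2 * σ - 3)) (Set.Ioc 0 1) := by
      have := (intervalIntegral.intervalIntegrable_rpow' (a := 0) (b := 1) (r := 2 * σ - 3) (by linarith))
      rwa [intervalIntegrable_iff_integrableOn_Ioc_of_le zero_le_one] at this
    refine lt_of_le_of_lt ?_ hi.lintegral_lt_top
    refine setLIntegral_mono' measurableSet_Ioc fun t ht => ?_
    apply ENNReal.ofReal_le_ofReal
    have h0 : 0 < t := ht.1
    unfold Tf
    refine mul_le_of_le_one_right (by positivity) (inv_le_one_of_one_le₀ (one_le_pow₀ ?_))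
    nlinarith
  · have hi : IntegrableOn (fun t : ℝ => t ^ (-3 : ℝ)) (Set.Ioi 1) :=
      integrableOn_Ioi_rpow_of_lt (by norm_num) one_pos
    refine lt_of_le_of_lt ?_ hi.lintegral_lt_top
    refine setLIntegral_mono' measurableSet_Ioi fun t ht => ?_
    apply ENNReal.ofReal_le_ofReal
    have h1 : (1:ℝ) < t := ht
    have h0 : 0 < t := by linarith
    unfold Tf
    rw [← div_eq_mul_inv, div_le_iff₀ (by positivity)]
    calc t ^ (2 * σ - 3) ≤ t ^ (2 * (a:ℝ) - 3) :=
          Real.rpow_le_rpow_of_exponent_le h1.le (by linarith)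
      _ = t ^ (-3:ℝ) * (t ^ 2) ^ a := by
        rw [← pow_mul, ← Real.rpow_natCast, ← Real.rpow_add h0]; push_cast; congr 1; ring
      _ ≤ _ := by gcongr; nlinarith

theorem tint (σ : ℝ) (a : ℕ) (m : ℝ) (hm : 0 < m) :
    ∫⁻ t in Set.Ioi (0:ℝ), ENNReal.ofReal (Tf σ a m t) =
      ENNReal.ofReal (m ^ (1 - σ)) * ∫⁻ t in Set.Ioi (0:ℝ), ENNReal.ofReal (Tf σ a 1 t) := by
  have hs : 0 < m ^ (1/2 : ℝ) := by positivity
  rw [← lintegral_indicator measurableSet_Ioi, ← lintegral_indicator measurableSet_Ioi]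
  have hmeas : Measurable ((Set.Ioi (0:ℝ)).indicator fun t => ENNReal.ofReal (Tf σ a 1 t)) :=
    ((Tf_meas σ a 1).ennreal_ofReal).indicator measurableSet_Ioi
  have h1 := lint_affine _ hmeas (m ^ (1/2 : ℝ)) 0 hs.ne'
  have h2 : ∀ t, (Set.Ioi (0:ℝ)).indicator (fun t => ENNReal.ofReal (Tf σ a m t)) t =
      ENNReal.ofReal (m ^ (3/2 - σ)) *
        (Set.Ioi (0:ℝ)).indicator (fun t => ENNReal.ofReal (Tf σ a 1 t)) (m ^ (1/2 : ℝ) * t + 0) := by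
    intro t
    by_cases ht : 0 < t
    · have ht' : 0 < m ^ (1/2 : ℝ) * t + 0 := by positivity
      rw [Set.indicator_of_mem (show t ∈ Set.Ioi (0:ℝ) from ht), Set.indicator_of_mem (show _ ∈ Set.Ioi (0:ℝ) from ht'),
        ← ENNReal.ofReal_mul (by positivity)]
      congr 1
      unfold Tf
      rw [add_zero, Real.mul_rpow hs.le ht.le, ← Real.rpow_mul hm.le, mul_pow, ← Real.rpow_natCast (m ^ (1/2:ℝ)),
        ← Real.rpow_mul hm.le]
      have e : m ^ (3/2 - σ) * (m ^ (1/2 * (2 * σ - 3)) * t ^ (2 * σ - 3) * ((1 + m ^ ((1/2:ℝ) * (2:ℕ)) * t ^ 2 * 1) ^ a)⁻¹)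
        = (m ^ (3/2 - σ) * m ^ (1/2 * (2 * σ - 3))) * (t ^ (2 * σ - 3) * ((1 + m ^ ((1/2:ℝ) * (2:ℕ)) * t ^ 2 * 1) ^ a)⁻¹) := by ring
      rw [e, ← Real.rpow_add hm]
      norm_num
      rw [show 3/2 - σ + 1/2 * (2 * σ - 3) = 0 by ring, Real.rpow_zero, one_mul, mul_comm m]
    · have ht' : ¬ 0 < m ^ (1/2 : ℝ) * t + 0 := by
        rw [add_zero, mul_pos_iff_of_pos_left hs]; exact ht
      rw [Set.indicator_of_notMem (show t ∉ Set.Ioi (0:ℝ) from ht), Set.indicator_of_notMem (show _ ∉ Set.Ioi (0:ℝ) from ht'), mul_zero]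
  simp_rw [h2]
  rw [lintegral_const_mul _ (by fun_prop), h1, ← mul_assoc, ← ENNReal.ofReal_mul (by positivity)]
  congr 2
  rw [abs_of_pos (by positivity), ← Real.rpow_neg hm.le, ← Real.rpow_add hm]
  congr 1; ring

theorem sum_div (σ : ℝ) (hσ : 1 < σ) :
    ∑' n : ℕ+, ((n : ℕ).divisors.card : ENNReal) * ENNReal.ofReal ((n : ℝ) ^ (-σ)) < ⊤ := by
  have hz : ∑' n : ℕ+, ENNReal.ofReal ((n : ℝ) ^ (-σ)) < ⊤ := by
    have hs : Summable fun n : ℕ => (n:ℝ) ^ (-σ) := Real.summable_nat_rpow.2 (by linarith)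
    have hs' : Summable fun n : ℕ+ => ((n:ℕ):ℝ) ^ (-σ) := hs.comp_injective PNat.coe_injective
    have := hs'.tsum_ofReal_lt_top
    exact this
  have h1 : ∀ n : ℕ+, ((n : ℕ).divisors.card : ENNReal) * ENNReal.ofReal ((n : ℝ) ^ (-σ)) =
      ∑' _ : Nat.divisorsAntidiagonal n, ENNReal.ofReal ((n : ℝ) ^ (-σ)) := by
    intro n
    rw [tsum_fintype, Finset.sum_const, Finset.card_univ, Fintype.card_coe, nsmul_eq_mul,
      ← Nat.map_div_right_divisors, Finset.card_map]
  simp_rw [h1]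
  rw [← ENNReal.tsum_sigma (fun (n : ℕ+) (_ : Nat.divisorsAntidiagonal n) => ENNReal.ofReal ((n : ℝ) ^ (-σ))),
    ← sigmaAntidiagonalEquivProd.symm.tsum_eq]
  have h2 : ∀ c : ℕ+ × ℕ+, ENNReal.ofReal ((((sigmaAntidiagonalEquivProd.symm c).1 : ℕ) : ℝ) ^ (-σ)) =
      ENNReal.ofReal ((c.1 : ℝ) ^ (-σ)) * ENNReal.ofReal ((c.2 : ℝ) ^ (-σ)) := by
    intro c
    rw [sigmaAntidiagonalEquivProd_symm_apply_fst, ← ENNReal.ofReal_mul (by positivity),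
      ← Real.mul_rpow (by positivity) (by positivity)]
    push_cast; rfl
  simp_rw [h2]
  rw [ENNReal.tsum_prod']
  simp_rw [ENNReal.tsum_mul_left, ENNReal.tsum_mul_right]
  exact ENNReal.mul_lt_top hz hz

theorem sum_div_nat (σ : ℝ) (hσ : 1 < σ) :
    ∑' n : ℕ, (n.divisors.card : ENNReal) * ENNReal.ofReal ((n : ℝ) ^ (-σ)) < ⊤ := by
  rw [← PNat.coe_injective.tsum_eq]
  · exact sum_div σ hσ
  · intro n hn
    rcases Nat.eq_zero_or_pos n with rfl | h
    · simp at hn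
    · exact ⟨⟨n, h⟩, rfl⟩

theorem tsum_int_le (g : ℕ → ENNReal) (F : ℤ → ENNReal)
    (hF : ∀ m : ℤ, F m ≤ g m.natAbs) : ∑' m : ℤ, F m ≤ 2 * ∑' n, g n := by
  calc ∑' m : ℤ, F m ≤ ∑' m : ℤ, g m.natAbs := ENNReal.tsum_le_tsum hF
    _ ≤ ∑' p : Bool × ℕ, g p.2 := by
      have hinj : Function.Injective (fun m : ℤ => (decide (0 ≤ m), m.natAbs)) := by
        intro a b h
        simp only [Prod.mk.injEq, decide_eq_decide] at h
        omega
      exact ENNReal.tsum_comp_le_tsum_of_injective hinj (fun p : Bool × ℕ => g p.2)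
    _ = 2 * ∑' n, g n := by
      rw [ENNReal.tsum_prod', tsum_fintype]; simp [two_mul]

theorem sum_div_four (σ : ℝ) (hσ : 1 < σ) :
    ∑' n : ℕ, ((4 * n).divisors.card : ENNReal) * ENNReal.ofReal ((n : ℝ) ^ (-σ)) < ⊤ := by
  have h1 : ∀ n : ℕ, ((4 * n).divisors.card : ENNReal) * ENNReal.ofReal ((n : ℝ) ^ (-σ)) =
      ENNReal.ofReal ((4:ℝ) ^ σ) *
        (((4 * n).divisors.card : ENNReal) * ENNReal.ofReal (((4 * n : ℕ) : ℝ) ^ (-σ))) := by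
    intro n
    rw [mul_left_comm, ← ENNReal.ofReal_mul (by positivity)]
    congr 2
    push_cast
    rw [Real.mul_rpow (by norm_num) (by positivity), ← mul_assoc, ← Real.rpow_add (by norm_num)]
    simp
  simp_rw [h1]
  rw [ENNReal.tsum_mul_left]
  refine ENNReal.mul_lt_top ENNReal.ofReal_lt_top (lt_of_le_of_lt ?_ (sum_div_nat σ hσ))
  exact ENNReal.tsum_comp_le_tsum_of_injective (f := fun n : ℕ => 4 * n)
    (fun a b h => by simpa using h)
    (fun n => (n.divisors.card : ENNReal) * ENNReal.ofReal ((n : ℝ) ^ (-σ)))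

/-- The `t`-integral. -/
noncomputable def Hint (σ : ℝ) (a : ℕ) (m : ℤ) : ENNReal :=
  ∫⁻ t in Set.Ioi (0:ℝ), ENNReal.ofReal (Tf σ a |(m:ℝ)| t)

noncomputable def Kf (σ : ℝ) (a : ℕ) (D : ℤ) (q : ℤ × ℤ) : ENNReal :=
  if q.1 ≠ 0 ∧ 4 * q.1 ∣ q.2 ^ 2 - D then Hint σ a q.1 * Uint q.1 q.2 else 0

theorem sumK (σ : ℝ) (a : ℕ) (hσ : 1 < σ) (ha : σ ≤ a) :
    ∃ C : ENNReal, C < ⊤ ∧ ∀ D : ℤ, D ≠ 0 → ∑' q, Kf σ a D q ≤ C * (D.natAbs : ENNReal) := by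
  set I := ∫⁻ t in Set.Ioi (0:ℝ), ENNReal.ofReal (Tf σ a 1 t) with hI
  have hIt : I < ⊤ := tint_one σ a hσ ha
  set S := ∑' n : ℕ, ((4 * n).divisors.card : ENNReal) * ENNReal.ofReal ((n : ℝ) ^ (-σ)) with hS
  have hSt : S < ⊤ := sum_div_four σ hσ
  refine ⟨2 * (I * ENNReal.ofReal (9 * Real.pi) * S), ?_, ?_⟩
  · exact ENNReal.mul_lt_top (by simp) (ENNReal.mul_lt_top
      (ENNReal.mul_lt_top hIt ENNReal.ofReal_lt_top) hSt)
  intro D hD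
  rw [ENNReal.tsum_prod']
  have := tsum_int_le (fun n => I * ENNReal.ofReal (9 * Real.pi) * D.natAbs *
    (((4 * n).divisors.card : ENNReal) * ENNReal.ofReal ((n : ℝ) ^ (-σ))))
    (fun m => ∑' x, Kf σ a D (m, x)) ?_
  · refine this.trans (le_of_eq ?_)
    rw [ENNReal.tsum_mul_left]
    ring
  · intro m
    by_cases hm : m = 0
    · simp [Kf, hm]
    have hmR : 0 < |(m:ℝ)| := abs_pos.2 (by exact_mod_cast hm)
    have h1 : ∀ x, Kf σ a D (m, x) = Hint σ a m * (if 4 * m ∣ x ^ 2 - D then Uint m x else 0) := by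
      intro x
      simp [Kf, hm]
    simp_rw [h1]
    rw [ENNReal.tsum_mul_left, Hint, tint σ a _ hmR]
    refine (mul_le_mul_right (sumU m D hm hD) _).trans (le_of_eq ?_)
    have e : ENNReal.ofReal ((m.natAbs : ℝ) ^ (-σ)) =
        ENNReal.ofReal (|(m:ℝ)| ^ (1 - σ)) * ENNReal.ofReal ((m.natAbs : ℝ)⁻¹) := by
      rw [← ENNReal.ofReal_mul (by positivity), Nat.cast_natAbs, Int.cast_abs,
        ← Real.rpow_neg_one, ← Real.rpow_add hmR]
      congr 2; ring
    rw [e]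
    ring

/-- Elementary estimates for one component of the action. -/
theorem rho_bounds (κ k t u : ℝ) (hk : 1 ≤ k) (hκ : 1 ≤ κ) (ht : 0 < t) (x : ℝ × ℝ × ℝ) :
    let X := rhoAct (κ * t) (κ * u / t) (κ / t) (k * x.1, k * x.2.1, k * x.2.2)
    t ^ 2 * |x.1| ≤ ‖X‖ ∧ (2 * u * x.1 + x.2.1) ^ 2 ≤ ‖X‖ ^ 2 ∧
      k ^ 2 * κ ^ 4 * |x.2.1 ^ 2 - 4 * x.1 * x.2.2| ≤ 5 * ‖X‖ ^ 2 := by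
  intro X
  have hκ0 : 0 < κ := by linarith
  have hk0 : 0 < k := by linarith
  have e1 : X.1 = κ ^ 2 * k * (t ^ 2 * x.1) := by simp only [X, rhoAct]; ring
  have e2 : X.2.1 = κ ^ 2 * k * (2 * u * x.1 + x.2.1) := by
    simp only [X, rhoAct]; field_simp
  have e3 : X.2.1 ^ 2 - 4 * X.1 * X.2.2 = k ^ 2 * κ ^ 4 * (x.2.1 ^ 2 - 4 * x.1 * x.2.2) := by
    simp only [X, rhoAct]; field_simp; ring
  have n1 : |X.1| ≤ ‖X‖ := norm_fst_le X
  have n2 : |X.2.1| ≤ ‖X‖ := (norm_fst_le X.2).trans (norm_snd_le X)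
  have n3 : |X.2.2| ≤ ‖X‖ := (norm_snd_le X.2).trans (norm_snd_le X)
  have hκk : 1 ≤ κ ^ 2 * k := one_le_mul_of_one_le_of_one_le (one_le_pow₀ hκ) hk
  refine ⟨?_, ?_, ?_⟩
  · refine le_trans ?_ n1
    rw [e1, abs_mul, abs_of_pos (by positivity : 0 < κ ^ 2 * k), abs_mul, abs_of_pos (by positivity : 0 < t ^ 2)]
    exact le_mul_of_one_le_left (by positivity) hκk
  · have : |2 * u * x.1 + x.2.1| ≤ ‖X‖ := by
      refine le_trans ?_ n2
      rw [e2, abs_mul, abs_of_pos (by positivity : 0 < κ ^ 2 * k)]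
      exact le_mul_of_one_le_left (by positivity) hκk
    rw [← sq_abs]; gcongr
  · have h : |X.2.1 ^ 2 - 4 * X.1 * X.2.2| ≤ 5 * ‖X‖ ^ 2 := by
      calc |X.2.1 ^ 2 - 4 * X.1 * X.2.2| ≤ |X.2.1 ^ 2| + |4 * X.1 * X.2.2| := abs_sub _ _
        _ = |X.2.1| ^ 2 + 4 * (|X.1| * |X.2.2|) := by
          rw [abs_mul, abs_mul, abs_pow]; norm_num; ring
        _ ≤ ‖X‖ ^ 2 + 4 * (‖X‖ * ‖X‖) := by gcongr
        _ = _ := by ring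
    rwa [e3, abs_mul, abs_of_pos (by positivity : 0 < k ^ 2 * κ ^ 4)] at h

def discr (q : (ℤ × ℤ × ℤ) × (ℤ × ℤ × ℤ)) : ℤ := q.1.2.1 ^ 2 - 4 * q.1.1 * q.1.2.2

theorem f_bound (f : SchwartzMap Vsp ℂ) (a M : ℕ) (hM : 4 ≤ M) : ∃ C : ℝ, 0 ≤ C ∧ ∀ p ∈ ZplusDomain, ∀ (k : ℕ+) (x : Lset),
    (k : ℝ) * ‖f (act p (toR ((k : ℤ) • (x : (ℤ × ℤ × ℤ) × (ℤ × ℤ × ℤ)))))‖ ≤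
      C * ((p.1 ^ (4 * M))⁻¹ * (((1 + p.2.1 ^ 2 * |(x.1.1.1 : ℝ)|) ^ a)⁻¹ *
        (((1 + p.2.2.1 ^ 2 * |(x.1.2.1 : ℝ)|) ^ a)⁻¹ *
        ((1 + (2 * p.2.2.2.1 * x.1.1.1 + x.1.1.2.1) ^ 2)⁻¹ *
        (1 + (2 * p.2.2.2.2 * x.1.2.1 + x.1.2.2.1) ^ 2)⁻¹)))) *
        (((k : ℝ) ^ 2)⁻¹ * ((|(discr x : ℝ)|) ^ 4)⁻¹) := by
  have hdec := SchwartzMap.one_add_le_sup_seminorm_apply (𝕜 := ℝ) (m := (a + a + 2 + 2 + 2 * M, 0))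
    (k := a + a + 2 + 2 + 2 * M) (n := 0) le_rfl le_rfl f
  set C0 : ℝ := 2 ^ (a + a + 2 + 2 + 2 * M, 0).1 * ((Finset.Iic (a + a + 2 + 2 + 2 * M, 0)).sup fun m => SchwartzMap.seminorm ℝ m.1 m.2) f
    with hC0
  refine ⟨C0 * 5 ^ M, by rw [hC0]; positivity, ?_⟩
  rintro ⟨μ, t, s, u, v⟩ ⟨hμ, ht, hs, -, -⟩ k ⟨⟨⟨x1, x2, x3⟩, ⟨y1, y2, y3⟩⟩, hx⟩
  replace hμ : 1 ≤ μ := hμ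
  replace ht : 0 < t := ht
  replace hs : 0 < s := hs
  have hk : (1:ℝ) ≤ k := by exact_mod_cast (one_le : 1 ≤ k)
  obtain ⟨hxe, hx0⟩ := hx
  simp only at hxe hx0
  simp only [discr]
  have hDne : x2 ^ 2 - 4 * x1 * x3 ≠ 0 := right_ne_zero_of_mul hx0
  set D := x2 ^ 2 - 4 * x1 * x3 with hD
  have hD1 : (1:ℝ) ≤ |(D:ℝ)| := by exact_mod_cast Int.one_le_abs hDne
  set V := act (μ, t, s, u, v) (toR ((k : ℤ) • (((x1, x2, x3), (y1, y2, y3)) : (ℤ × ℤ × ℤ) × (ℤ × ℤ × ℤ)))) with hV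
  have hb := rho_bounds μ k t u hk hμ ht (x1, x2, x3)
  have hb' := rho_bounds μ k s v hk hμ hs (y1, y2, y3)
  have v1 : V.1 = rhoAct (μ * t) (μ * u / t) (μ / t) ((k:ℝ) * x1, (k:ℝ) * x2, (k:ℝ) * x3) := by
    simp [hV, act, toR]
  have v2 : V.2 = rhoAct (μ * s) (μ * v / s) (μ / s) ((k:ℝ) * y1, (k:ℝ) * y2, (k:ℝ) * y3) := by
    simp [hV, act, toR]
  simp only [← v1] at hb
  simp only [← v2] at hb'
  have n1 : ‖V.1‖ ≤ ‖V‖ := norm_fst_le V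
  have n2 : ‖V.2‖ ≤ ‖V‖ := norm_snd_le V
  obtain ⟨b1, b2, b3⟩ := hb
  obtain ⟨c1, c2, -⟩ := hb'
  have hn1 := norm_nonneg V.1
  have hn2 := norm_nonneg V.2
  set R := ‖V‖ with hR
  have hR0 : 0 ≤ R := norm_nonneg V
  have q1 : ‖V.1‖ ^ 2 ≤ R ^ 2 := by gcongr
  have q2 : ‖V.2‖ ^ 2 ≤ R ^ 2 := by gcongr
  have hbD : (k:ℝ) ^ 2 * μ ^ 4 * |(D:ℝ)| ≤ 5 * (1 + R) ^ 2 := by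
    have : ((D:ℤ):ℝ) = (x2:ℝ) ^ 2 - 4 * x1 * x3 := by rw [hD]; push_cast; ring
    rw [this]
    nlinarith
  have hbig : (1 + t ^ 2 * |(x1:ℝ)|) ^ a * (1 + s ^ 2 * |(y1:ℝ)|) ^ a *
      (1 + (2 * u * x1 + x2) ^ 2) * (1 + (2 * v * y1 + y2) ^ 2) * ((k:ℝ) ^ 2 * μ ^ 4 * |(D:ℝ)|) ^ M ≤
      5 ^ M * (1 + R) ^ (a + a + 2 + 2 + 2 * M) := by
    calc _ ≤ (1 + R) ^ a * (1 + R) ^ a * (1 + R) ^ 2 * (1 + R) ^ 2 * (5 * (1 + R) ^ 2) ^ M := by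
          refine mul_le_mul ?_ (pow_le_pow_left₀ (by positivity) hbD M) (by positivity) (by positivity)
          gcongr
          · exact b1.trans n1
          · exact c1.trans n2
          · nlinarith
          · nlinarith
      _ = _ := by rw [mul_pow, ← pow_mul]; ring
  have hf0 := hdec V
  rw [norm_iteratedFDeriv_zero] at hf0
  have hk3 : (k:ℝ) ^ 3 * μ ^ (4 * M) * |(D:ℝ)| ^ 4 ≤ ((k:ℝ) ^ 2 * μ ^ 4 * |(D:ℝ)|) ^ M := by
    rw [mul_pow, mul_pow, ← pow_mul, ← pow_mul]
    gcongr <;> first | assumption | omega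
  set P1 := (1 + t ^ 2 * |(x1:ℝ)|) ^ a
  set P2 := (1 + s ^ 2 * |(y1:ℝ)|) ^ a
  set P3 := 1 + (2 * u * x1 + x2) ^ 2
  set P4 := 1 + (2 * v * y1 + y2) ^ 2
  have p1 : 0 < P1 := by positivity
  have p2 : 0 < P2 := by positivity
  have p3 : 0 < P3 := by positivity
  have p4 : 0 < P4 := by positivity
  have hμ0 : 0 < μ := by linarith
  have hk0 : (0:ℝ) < k := by linarith
  have hD0 : (0:ℝ) < |(D:ℝ)| := by linarith
  have hfin : P1 * P2 * P3 * P4 * ((k:ℝ) ^ 3 * μ ^ (4 * M) * |(D:ℝ)| ^ 4) * ‖f V‖ ≤ C0 * 5 ^ M := by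
    calc _ ≤ P1 * P2 * P3 * P4 * (((k:ℝ) ^ 2 * μ ^ 4 * |(D:ℝ)|) ^ M) * ‖f V‖ := by gcongr
      _ ≤ 5 ^ M * (1 + R) ^ (a + a + 2 + 2 + 2 * M) * ‖f V‖ := by gcongr
      _ = 5 ^ M * ((1 + R) ^ (a + a + 2 + 2 + 2 * M) * ‖f V‖) := by ring
      _ ≤ 5 ^ M * C0 := by gcongr
      _ = _ := by ring
  have e : C0 * 5 ^ M * ((μ ^ (4 * M))⁻¹ * (P1⁻¹ * (P2⁻¹ * (P3⁻¹ * P4⁻¹)))) * (((k:ℝ) ^ 2)⁻¹ * (|(D:ℝ)| ^ 4)⁻¹)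
    = C0 * 5 ^ M / (P1 * P2 * P3 * P4 * ((k:ℝ) ^ 2 * μ ^ (4 * M) * |(D:ℝ)| ^ 4)) := by
    field_simp
  rw [e, le_div_iff₀ (by positivity)]
  refine le_trans (le_of_eq ?_) hfin
  ring

theorem weight_bound (s₁ s₂ w : ℂ) (M : ℕ) (hM : 2 * s₁.re + 2 * s₂.re + 4 * w.re + 1 ≤ 4 * M)
    (μ t s : ℝ) (hμ : 1 ≤ μ) (ht : 0 < t) (hs : 0 < s) :
    ‖((μ ^ 2 * t ^ 2 : ℝ) : ℂ) ^ s₁ * ((μ ^ 2 * s ^ 2 : ℝ) : ℂ) ^ s₂ * ((μ : ℝ) : ℂ) ^ (4 * w)‖ *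
      ‖(((t ^ 3 * s ^ 3 * μ)⁻¹ : ℝ) : ℂ)‖ * (μ ^ (4 * M))⁻¹ ≤
      (μ ^ 2)⁻¹ * (t ^ (2 * s₁.re - 3) * s ^ (2 * s₂.re - 3)) := by
  have hμ0 : 0 < μ := by linarith
  rw [norm_mul, norm_mul, Complex.norm_cpow_eq_rpow_re_of_pos (by positivity),
    Complex.norm_cpow_eq_rpow_re_of_pos (by positivity), Complex.norm_cpow_eq_rpow_re_of_pos (by positivity),
    Complex.norm_real, Real.norm_of_nonneg (by positivity)]
  have e4 : (4 * w).re = 4 * w.re := by simp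
  have h2 : ∀ z : ℝ, 0 < z → ∀ σ : ℝ, (z ^ 2) ^ σ = z ^ (2 * σ) := by
    intro z hz σ
    rw [← Real.rpow_natCast, ← Real.rpow_mul hz.le]; norm_num
  rw [e4, Real.mul_rpow (by positivity) (by positivity), Real.mul_rpow (by positivity) (by positivity),
    h2 μ hμ0, h2 μ hμ0, h2 t ht, h2 s hs]
  have e : μ ^ (2 * s₁.re) * t ^ (2 * s₁.re) * (μ ^ (2 * s₂.re) * s ^ (2 * s₂.re)) * μ ^ (4 * w.re) *
      (t ^ 3 * s ^ 3 * μ)⁻¹ * (μ ^ (4 * M))⁻¹ =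
      (μ ^ (2 * s₁.re) * μ ^ (2 * s₂.re) * μ ^ (4 * w.re) * μ⁻¹ * (μ ^ (4 * M))⁻¹) *
      ((t ^ (2 * s₁.re) * (t ^ 3)⁻¹) * (s ^ (2 * s₂.re) * (s ^ 3)⁻¹)) := by
    rw [mul_inv, mul_inv]; ring
  have e3 : ∀ z : ℝ, 0 < z → ∀ σ : ℝ, z ^ (2 * σ) * (z ^ 3)⁻¹ = z ^ (2 * σ - 3) := by
    intro z hz σ
    rw [Real.rpow_sub hz, div_eq_mul_inv]; norm_cast
  rw [e, e3 t ht, e3 s hs]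
  gcongr
  have : μ ^ (2 * s₁.re) * μ ^ (2 * s₂.re) * μ ^ (4 * w.re) * μ⁻¹ * (μ ^ (4 * M))⁻¹ =
      μ ^ (2 * s₁.re + 2 * s₂.re + 4 * w.re + (-1) + (-(4 * M : ℕ))) := by
    rw [Real.rpow_add hμ0, Real.rpow_add hμ0, Real.rpow_add hμ0, Real.rpow_add hμ0,
      Real.rpow_neg_one, Real.rpow_neg hμ0.le, Real.rpow_natCast]
  rw [this, ← Real.rpow_natCast, ← Real.rpow_neg hμ0.le]
  apply Real.rpow_le_rpow_of_exponent_le hμ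
  push_cast
  linarith

/-- Separated majorant of a single term. -/
noncomputable def Maj (σ₁ σ₂ : ℝ) (a : ℕ) (x : (ℤ × ℤ × ℤ) × (ℤ × ℤ × ℤ)) (p : Param) : ENNReal :=
  ENNReal.ofReal ((p.1 ^ 2)⁻¹) * (ENNReal.ofReal (Tf σ₁ a |(x.1.1 : ℝ)| p.2.1) *
    (ENNReal.ofReal (Tf σ₂ a |(x.2.1 : ℝ)| p.2.2.1) *
    (ENNReal.ofReal ((1 + (2 * p.2.2.2.1 * x.1.1 + x.1.2.1) ^ 2)⁻¹) *
      ENNReal.ofReal ((1 + (2 * p.2.2.2.2 * x.2.1 + x.2.2.1) ^ 2)⁻¹))))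

theorem Maj_meas (σ₁ σ₂ : ℝ) (a : ℕ) (x : (ℤ × ℤ × ℤ) × (ℤ × ℤ × ℤ)) : Measurable (Maj σ₁ σ₂ a x) := by
  unfold Maj Tf; fun_prop

theorem Maj_int (σ₁ σ₂ : ℝ) (a : ℕ) (x : (ℤ × ℤ × ℤ) × (ℤ × ℤ × ℤ)) :
    ∫⁻ p in ZplusDomain, Maj σ₁ σ₂ a x p =
      (∫⁻ μ in Set.Ici (1:ℝ), ENNReal.ofReal ((μ ^ 2)⁻¹)) *
        ((Hint σ₁ a x.1.1 * Uint x.1.1 x.1.2.1) * (Hint σ₂ a x.2.1 * Uint x.2.1 x.2.2.1)) := by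
  have m1 := (Tf_meas σ₁ a |(x.1.1 : ℝ)|)
  have m2 := (Tf_meas σ₂ a |(x.2.1 : ℝ)|)
  unfold ZplusDomain Maj
  rw [Measure.volume_eq_prod, ← Measure.prod_restrict, lintegral_prod_mul
    (f := fun y : ℝ => ENNReal.ofReal ((y ^ 2)⁻¹))
    (g := fun p : ℝ × ℝ × ℝ × ℝ => ENNReal.ofReal (Tf σ₁ a |(x.1.1 : ℝ)| p.1) *
    (ENNReal.ofReal (Tf σ₂ a |(x.2.1 : ℝ)| p.2.1) *
    (ENNReal.ofReal ((1 + (2 * p.2.2.1 * x.1.1 + x.1.2.1) ^ 2)⁻¹) *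
      ENNReal.ofReal ((1 + (2 * p.2.2.2 * x.2.1 + x.2.2.1) ^ 2)⁻¹)))) (by fun_prop) (by fun_prop)]
  rw [Measure.volume_eq_prod, ← Measure.prod_restrict, lintegral_prod_mul
    (f := fun y : ℝ => ENNReal.ofReal (Tf σ₁ a |(x.1.1 : ℝ)| y))
    (g := fun p : ℝ × ℝ × ℝ =>
    (ENNReal.ofReal (Tf σ₂ a |(x.2.1 : ℝ)| p.1) *
    (ENNReal.ofReal ((1 + (2 * p.2.1 * x.1.1 + x.1.2.1) ^ 2)⁻¹) *
      ENNReal.ofReal ((1 + (2 * p.2.2 * x.2.1 + x.2.2.1) ^ 2)⁻¹)))) (by fun_prop) (by fun_prop)]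
  rw [Measure.volume_eq_prod, ← Measure.prod_restrict, lintegral_prod_mul
    (f := fun y : ℝ => ENNReal.ofReal (Tf σ₂ a |(x.2.1 : ℝ)| y))
    (g := fun p : ℝ × ℝ =>
    (ENNReal.ofReal ((1 + (2 * p.1 * x.1.1 + x.1.2.1) ^ 2)⁻¹) *
      ENNReal.ofReal ((1 + (2 * p.2 * x.2.1 + x.2.2.1) ^ 2)⁻¹))) (by fun_prop) (by fun_prop)]
  rw [Measure.volume_eq_prod, ← Measure.prod_restrict, lintegral_prod_mul
    (f := fun y : ℝ => ENNReal.ofReal ((1 + (2 * y * x.1.1 + x.1.2.1) ^ 2)⁻¹))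
    (g := fun y : ℝ => ENNReal.ofReal ((1 + (2 * y * x.2.1 + x.2.2.1) ^ 2)⁻¹)) (by fun_prop) (by fun_prop)]
  unfold Hint Uint
  ring

theorem sum_int_inv_sq : ∑' D : ℤ, ENNReal.ofReal ((((D.natAbs : ℕ) : ℝ) ^ 2)⁻¹) < ⊤ := by
  refine lt_of_le_of_lt (tsum_int_le (fun n => ENNReal.ofReal (((n : ℝ) ^ 2)⁻¹)) _ fun m => le_rfl) ?_
  have hs : Summable fun n : ℕ => ((n:ℝ) ^ 2)⁻¹ := Real.summable_nat_pow_inv.2 (by norm_num)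
  exact ENNReal.mul_lt_top (by simp) hs.tsum_ofReal_lt_top

theorem sum_Lset (σ₁ σ₂ : ℝ) (a : ℕ) (h1 : 1 < σ₁) (h2 : 1 < σ₂) (ha1 : σ₁ ≤ a) (ha2 : σ₂ ≤ a) :
    ∑' x : Lset, ENNReal.ofReal ((|(discr x : ℝ)| ^ 4)⁻¹) *
      ((Hint σ₁ a x.1.1.1 * Uint x.1.1.1 x.1.1.2.1) * (Hint σ₂ a x.1.2.1 * Uint x.1.2.1 x.1.2.2.1)) < ⊤ := by
  obtain ⟨C1, hC1, hK1⟩ := sumK σ₁ a h1 ha1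
  obtain ⟨C2, hC2, hK2⟩ := sumK σ₂ a h2 ha2
  set G : ℤ × (ℤ × ℤ) × (ℤ × ℤ) → ENNReal := fun q =>
    (if q.1 ≠ 0 then ENNReal.ofReal ((|(q.1 : ℝ)| ^ 4)⁻¹) else 0) * (Kf σ₁ a q.1 q.2.1 * Kf σ₂ a q.1 q.2.2) with hG
  set φ : Lset → ℤ × (ℤ × ℤ) × (ℤ × ℤ) := fun x => (discr x, (x.1.1.1, x.1.1.2.1), (x.1.2.1, x.1.2.2.1)) with hφ
  have hinj : Function.Injective φ := by
    rintro ⟨⟨⟨x1, x2, x3⟩, ⟨y1, y2, y3⟩⟩, hx, hx0⟩ ⟨⟨⟨x1', x2', x3'⟩, ⟨y1', y2', y3'⟩⟩, hx', hx0'⟩ h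
    simp only [hφ, discr, Prod.mk.injEq] at h hx hx' hx0
    obtain ⟨hd, ⟨rfl, rfl⟩, rfl, rfl⟩ := h
    have n1 : x1 ≠ 0 := by rintro rfl; simp at hx0
    have n2 : y1 ≠ 0 := by rintro rfl; simp at hx0
    have e1 : x3 = x3' := mul_left_cancel₀ n1 (by linarith)
    have e2 : y3 = y3' := mul_left_cancel₀ n2 (by linarith)
    subst e1 e2
    rfl
  have heq : ∀ x : Lset, ENNReal.ofReal ((|(discr x : ℝ)| ^ 4)⁻¹) *
      ((Hint σ₁ a x.1.1.1 * Uint x.1.1.1 x.1.1.2.1) * (Hint σ₂ a x.1.2.1 * Uint x.1.2.1 x.1.2.2.1)) = G (φ x) := by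
    rintro ⟨⟨⟨x1, x2, x3⟩, ⟨y1, y2, y3⟩⟩, hx, hx0⟩
    simp only [hφ, hG, Kf, discr] at hx hx0 ⊢
    have n1 : x1 ≠ 0 := by rintro rfl; simp at hx0
    have n2 : y1 ≠ 0 := by rintro rfl; simp at hx0
    rw [if_pos (right_ne_zero_of_mul hx0), if_pos ⟨n1, ⟨x3, by ring⟩⟩, if_pos ⟨n2, ⟨y3, by rw [hx]; ring⟩⟩]
  simp_rw [heq]
  refine lt_of_le_of_lt (ENNReal.tsum_comp_le_tsum_of_injective hinj G) ?_
  rw [ENNReal.tsum_prod']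
  have hD : ∀ D : ℤ, ∑' q, G (D, q) ≤ C1 * C2 * ENNReal.ofReal ((((D.natAbs : ℕ) : ℝ) ^ 2)⁻¹) := by
    intro D
    simp only [hG]
    by_cases hD : D = 0
    · simp [hD]
    rw [if_pos hD, ENNReal.tsum_mul_left, ENNReal.tsum_prod']
    simp_rw [ENNReal.tsum_mul_left, ENNReal.tsum_mul_right]
    refine (mul_le_mul_right (mul_le_mul' (hK1 D hD) (hK2 D hD)) _).trans (le_of_eq ?_)
    have hn : 0 < D.natAbs := Int.natAbs_pos.2 hD
    have e : ENNReal.ofReal ((((D.natAbs : ℕ) : ℝ) ^ 2)⁻¹) =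
        ENNReal.ofReal ((|(D : ℝ)| ^ 4)⁻¹) * ((D.natAbs : ENNReal) * (D.natAbs : ENNReal)) := by
      rw [← ENNReal.ofReal_natCast, ← ENNReal.ofReal_mul (by positivity), ← ENNReal.ofReal_mul (by positivity)]
      have : |(D:ℝ)| = (D.natAbs : ℝ) := by rw [Nat.cast_natAbs, Int.cast_abs]
      rw [this]
      congr 1
      have : (0:ℝ) < D.natAbs := by exact_mod_cast hn
      field_simp
    rw [e]; ring
  refine lt_of_le_of_lt (ENNReal.tsum_le_tsum hD) ?_
  rw [ENNReal.tsum_mul_left]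
  exact ENNReal.mul_lt_top (ENNReal.mul_lt_top hC1 hC2) sum_int_inv_sq

theorem Zint_meas (f : SchwartzMap Vsp ℂ) (s₁ s₂ w : ℂ) : Measurable (Zintegrand (⇑f) s₁ s₂ w) := by
  have hl : Measurable (latticeSum f) := by
    unfold latticeSum
    refine Measurable.tsum fun k => Measurable.tsum fun x => ?_
    refine Measurable.const_mul ?_ _
    refine f.continuous.measurable.comp ?_
    unfold act rhoAct
    fun_prop
  unfold Zintegrand
  fun_prop

theorem stmt15 (f : SchwartzMap Vsp ℂ)
    (hf : ∀ x y : ℝ × ℝ × ℝ, f (-x, y) = f (x, y) ∧ f (x, -y) = f (x, y))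
    (s₁ s₂ w : ℂ) (h1 : 1 < s₁.re) (h2 : 1 < s₂.re) :
    IntegrableOn (Zintegrand (⇑f) s₁ s₂ w) ZplusDomain volume := by
  refine ⟨(Zint_meas f s₁ s₂ w).aestronglyMeasurable, ?_⟩
  obtain ⟨a, ha⟩ := exists_nat_ge (max s₁.re s₂.re)
  obtain ⟨M0, hM0⟩ := exists_nat_ge (2 * s₁.re + 2 * s₂.re + 4 * w.re + 1)
  obtain ⟨C, hC, hfb⟩ := f_bound f a (M0 + 4) (by omega)
  have hdom : MeasurableSet ZplusDomain := by
    unfold ZplusDomain; measurability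
  have hpt : ∀ p ∈ ZplusDomain, ‖Zintegrand (⇑f) s₁ s₂ w p‖ₑ ≤
      ∑' (k : ℕ+) (x : Lset), ENNReal.ofReal (C * ((k:ℝ) ^ 2)⁻¹ * (|(discr x : ℝ)| ^ 4)⁻¹) * Maj s₁.re s₂.re a x p := by
    intro p hp
    have hp' := hp
    obtain ⟨hμ, ht, hs, -, -⟩ := hp
    replace hμ : 1 ≤ p.1 := hμ
    replace ht : 0 < p.2.1 := ht
    replace hs : 0 < p.2.2.1 := hs
    have hw := weight_bound s₁ s₂ w (M0 + 4) (by push_cast; linarith [(Nat.cast_nonneg M0 : (0:ℝ) ≤ M0)]) p.1 p.2.1 p.2.2.1 hμ ht hs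
    unfold Zintegrand
    rw [mul_right_comm, enorm_mul]
    unfold latticeSum
    calc _ ≤ _ * ∑' (k : ℕ+) (x : Lset), ‖(k : ℂ) * f (act p (toR ((k : ℤ) • (x : (ℤ × ℤ × ℤ) × (ℤ × ℤ × ℤ)))))‖ₑ := by
          gcongr
          refine enorm_tsum_le_tsum_enorm.trans (ENNReal.tsum_le_tsum fun k => enorm_tsum_le_tsum_enorm)
      _ ≤ _ := by
        simp_rw [← ENNReal.tsum_mul_left]
        refine ENNReal.tsum_le_tsum fun k => ENNReal.tsum_le_tsum fun x => ?_
        rw [← enorm_mul, ← ofReal_norm]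
        unfold Maj
        have hk2 : (0:ℝ) ≤ ((k:ℝ) ^ 2)⁻¹ := by positivity
        rw [← ENNReal.ofReal_mul (by positivity), ← ENNReal.ofReal_mul (by unfold Tf; positivity),
          ← ENNReal.ofReal_mul (by unfold Tf; positivity), ← ENNReal.ofReal_mul (by positivity),
          ← ENNReal.ofReal_mul (by positivity)]
        apply ENNReal.ofReal_le_ofReal
        rw [norm_mul, norm_mul _ (((p.2.1 ^ 3 * p.2.2.1 ^ 3 * p.1)⁻¹ : ℝ) : ℂ), norm_mul (k : ℂ)]
        have hkn : ‖(k:ℂ)‖ = (k:ℝ) := by simp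
        rw [hkn]
        refine (mul_le_mul_of_nonneg_left (hfb p hp' k x) (by positivity)).trans ?_
        unfold Tf
        set B1 := ((1 + p.2.1 ^ 2 * |(x.1.1.1 : ℝ)|) ^ a)⁻¹
        set B2 := ((1 + p.2.2.1 ^ 2 * |(x.1.2.1 : ℝ)|) ^ a)⁻¹
        set B3 := (1 + (2 * p.2.2.2.1 * x.1.1.1 + x.1.1.2.1) ^ 2)⁻¹
        set B4 := (1 + (2 * p.2.2.2.2 * x.1.2.1 + x.1.2.2.1) ^ 2)⁻¹
        set B5 := (|(discr x : ℝ)| ^ 4)⁻¹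
        have hB : 0 ≤ C * ((k:ℝ) ^ 2)⁻¹ * B5 * (B1 * B2 * B3 * B4) := by positivity
        have := mul_le_mul_of_nonneg_right hw hB
        refine le_trans (le_of_eq ?_) (this.trans (le_of_eq ?_)) <;> ring
  have hμi : ∫⁻ μ in Set.Ici (1:ℝ), ENNReal.ofReal ((μ ^ 2)⁻¹) < ⊤ := by
    rw [setLIntegral_congr Ioi_ae_eq_Ici.symm]
    have hi : IntegrableOn (fun t : ℝ => t ^ (-2 : ℝ)) (Set.Ioi 1) :=
      integrableOn_Ioi_rpow_of_lt (by norm_num) one_pos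
    refine lt_of_le_of_lt ?_ hi.lintegral_lt_top
    refine setLIntegral_mono' measurableSet_Ioi fun t ht => ?_
    have h0 : (0:ℝ) < t := lt_trans one_pos ht
    rw [Real.rpow_neg h0.le]; norm_cast
  rw [hasFiniteIntegral_iff_enorm]
  refine lt_of_le_of_lt (setLIntegral_mono' hdom hpt) ?_
  have hmm : ∀ (k : ℕ+) (x : Lset), Measurable fun p => ENNReal.ofReal (C * ((k:ℝ) ^ 2)⁻¹ * (|(discr x : ℝ)| ^ 4)⁻¹) * Maj s₁.re s₂.re a x p :=
    fun k x => (Maj_meas _ _ _ _).const_mul _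
  rw [lintegral_tsum fun k => (Measurable.tsum fun x => hmm k x).aemeasurable]
  simp_rw [fun k : ℕ+ => lintegral_tsum (μ := volume.restrict ZplusDomain) fun x : Lset => (hmm k x).aemeasurable]
  set I := ∫⁻ μ in Set.Ici (1:ℝ), ENNReal.ofReal ((μ ^ 2)⁻¹) with hI
  have hterm : ∀ (k : ℕ+) (x : Lset), ∫⁻ p in ZplusDomain, ENNReal.ofReal (C * ((k:ℝ) ^ 2)⁻¹ * (|(discr x : ℝ)| ^ 4)⁻¹) * Maj s₁.re s₂.re a x p =
      (ENNReal.ofReal C * I) * ENNReal.ofReal (((k:ℝ) ^ 2)⁻¹) * (ENNReal.ofReal ((|(discr x : ℝ)| ^ 4)⁻¹) *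
      ((Hint s₁.re a x.1.1.1 * Uint x.1.1.1 x.1.1.2.1) * (Hint s₂.re a x.1.2.1 * Uint x.1.2.1 x.1.2.2.1))) := by
    intro k x
    rw [lintegral_const_mul _ (Maj_meas _ _ _ _), Maj_int, ENNReal.ofReal_mul (by positivity), ENNReal.ofReal_mul hC]
    ring
  simp_rw [hterm, ENNReal.tsum_mul_left, ENNReal.tsum_mul_right]
  have hS := sum_Lset s₁.re s₂.re a h1 h2 ((le_max_left _ _).trans ha) ((le_max_right _ _).trans ha)
  have hk : ∑' k : ℕ+, ENNReal.ofReal (((k:ℝ) ^ 2)⁻¹) < ⊤ := by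
    have hs : Summable fun n : ℕ => ((n:ℝ) ^ 2)⁻¹ := Real.summable_nat_pow_inv.2 (by norm_num)
    have hs' : Summable fun n : ℕ+ => (((n:ℕ):ℝ) ^ 2)⁻¹ := hs.comp_injective PNat.coe_injective
    exact hs'.tsum_ofReal_lt_top
  simp_rw [ENNReal.tsum_mul_left]
  exact ENNReal.mul_lt_top (ENNReal.mul_lt_top (ENNReal.mul_lt_top ENNReal.ofReal_lt_top hμi) hk) hS
end
end
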